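/- arXiv:2407.14105 — 13 statements merged into one kernel-verified Lean document; each statement's English description precedes it below -/
import Mathlib

section
/- Let α and β be infinite strings over a finite alphabet Σ and let f : ℕ → ℕ (on positions ≥ 1) be color-preserving, i.e. β(f(x)) = α(x) for all x. Then f is a quasi-isometric reduction from α to β — that is, there exist real constants A ≥ 1 and B ≥ 0 such that for all positions x, y, (1/A)·|x − y| − B ≤ |f(x) − f(y)| ≤ A·|x − y| + B, and for every position y there exists x with |f(x) − y| ≤ A — if and only if there exists an integer C ≥ 1 such that f(1) ≤ C, |f(x) − f(x+1)| ≤ C for all x, and for all x, y, x + C < y implies f(x) < f(y). -/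
/-- An infinite string over an alphabet `Γ` is a function `ℕ → Γ`, with positions
indexed from 1.  `IsQI C α β f` says that `f : ℕ → ℕ` is a `C`-quasi-isometry from
the string `α` to the string `β`: `C ≥ 1`, `f` maps positions (`≥ 1`) to positions,
`f` is color-preserving (`β (f x) = α x`), condition (a) holds (`f 1 ≤ C` and
`|f (x+1) − f x| ≤ C`), and condition (b) holds (`x + C < y → f x < f y`). -/
def IsQI {Γ : Type*} (C : ℕ) (α β : ℕ → Γ) (f : ℕ → ℕ) : Prop :=
  1 ≤ C ∧
  (∀ x, 1 ≤ x → 1 ≤ f x) ∧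
  (∀ x, 1 ≤ x → β (f x) = α x) ∧
  f 1 ≤ C ∧
  (∀ x, 1 ≤ x → |((f (x + 1) : ℤ)) - (f x : ℤ)| ≤ (C : ℤ)) ∧
  (∀ x y, 1 ≤ x → x + C < y → f x < f y)

/-- Quasi-isometric reducibility `α ≤_qi β`: some `C`-quasi-isometry from `α` to `β`
exists. -/
def QIred {Γ : Type*} (α β : ℕ → Γ) : Prop := ∃ C f, IsQI C α β f

/-- Many-one quasi-isometric reducibility `α ≤_mqi β`: some computable
`C`-quasi-isometry from `α` to `β` exists. -/
def MQIred {Γ : Type*} (α β : ℕ → Γ) : Prop :=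
  ∃ C f, IsQI C α β f ∧ Computable f

/-- One-one quasi-isometric reducibility `α ≤_1qi β`: some computable
`C`-quasi-isometry from `α` to `β` exists which is injective on positions. -/
def OQIred {Γ : Type*} (α β : ℕ → Γ) : Prop :=
  ∃ C f, IsQI C α β f ∧ Computable f ∧
    (∀ x y, 1 ≤ x → 1 ≤ y → f x = f y → x = y)

/-- Permutation quasi-isometric reducibility `α ≤_pqi β`: some computable
`C`-quasi-isometry from `α` to `β` exists which is a bijection on positions. -/
def PQIred {Γ : Type*} (α β : ℕ → Γ) : Prop :=
  ∃ C f, IsQI C α β f ∧ Computable f ∧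
    (∀ x y, 1 ≤ x → 1 ≤ y → f x = f y → x = y) ∧
    (∀ y, 1 ≤ y → ∃ x, 1 ≤ x ∧ f x = y)

/-- `α ≡_mqi β`. -/
def MQIequiv {Γ : Type*} (α β : ℕ → Γ) : Prop := MQIred α β ∧ MQIred β α

/-- `α ≡_1qi β`. -/
def OQIequiv {Γ : Type*} (α β : ℕ → Γ) : Prop := OQIred α β ∧ OQIred β α

/-- `α ≡_pqi β`. -/
def PQIequiv {Γ : Type*} (α β : ℕ → Γ) : Prop := PQIred α β ∧ PQIred β α

/-- A color-preserving `f` is a quasi-isometric reduction from `α`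
to `β` (in the two-constant `(A,B)` sense, with density of the image) if and only if
there is an integer `C ≥ 1` with `f 1 ≤ C`, `|f x − f (x+1)| ≤ C` for all positions
`x`, and `x + C < y → f x < f y`. -/
theorem quasiIso_iff_single_constant {Γ : Type*} [Fintype Γ] (α β : ℕ → Γ)
    (f : ℕ → ℕ)
    (hpos : ∀ x, 1 ≤ x → 1 ≤ f x)
    (hcolor : ∀ x, 1 ≤ x → β (f x) = α x) :
    (∃ A B : ℝ, 1 ≤ A ∧ 0 ≤ B ∧
        (∀ x y : ℕ, 1 ≤ x → 1 ≤ y →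
          (1 / A) * |(x : ℝ) - (y : ℝ)| - B ≤ |(f x : ℝ) - (f y : ℝ)| ∧
            |(f x : ℝ) - (f y : ℝ)| ≤ A * |(x : ℝ) - (y : ℝ)| + B) ∧
        (∀ y : ℕ, 1 ≤ y → ∃ x : ℕ, 1 ≤ x ∧ |(f x : ℝ) - (y : ℝ)| ≤ A)) ↔
      (∃ C : ℕ, 1 ≤ C ∧ f 1 ≤ C ∧
        (∀ x, 1 ≤ x → |((f x : ℤ)) - (f (x + 1) : ℤ)| ≤ (C : ℤ)) ∧
        (∀ x y, 1 ≤ x → x + C < y → f x < f y)) := by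
  constructor
  · rintro ⟨A, B, hA, hB, h, -⟩
    have hA0 : 0 < A := by linarith
    obtain ⟨C, hC⟩ := exists_nat_ge ((f 1 : ℝ) + A + B + A * (A + 2 * B))
    have hAB : 0 ≤ A * (A + 2 * B) := by positivity
    have hf1 : (0 : ℝ) ≤ f 1 := Nat.cast_nonneg _
    -- distance bound
    have hlow : ∀ x y : ℕ, 1 ≤ x → 1 ≤ y → (y : ℝ) - x ≤ A * (|(f x : ℝ) - f y| + B) := by
      intro x y hx hy
      have h1 := (h x y hx hy).1
      have h2 : |(x : ℝ) - y| = A * ((1 / A) * |(x : ℝ) - y|) := by field_simp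
      have h3 : A * ((1 / A) * |(x : ℝ) - y|) ≤ A * (|(f x : ℝ) - f y| + B) :=
        mul_le_mul_of_nonneg_left (by linarith) hA0.le
      have h4 := neg_abs_le ((x : ℝ) - y)
      linarith
    have hstep : ∀ x : ℕ, 1 ≤ x → |(f x : ℝ) - f (x + 1)| ≤ A + B := by
      intro x hx
      have h1 := (h x (x + 1) hx (by omega)).2
      have h2 : |(x : ℝ) - ((x + 1 : ℕ) : ℝ)| = 1 := by
        push_cast
        rw [show (x : ℝ) - (x + 1) = -1 by ring]
        simp
      rw [h2] at h1
      linarith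
    refine ⟨C, ?_, ?_, ?_, ?_⟩
    · have : (1 : ℝ) ≤ C := by linarith
      exact_mod_cast this
    · have : (f 1 : ℝ) ≤ C := by linarith
      exact_mod_cast this
    · intro x hx
      have h1 := hstep x hx
      have : |(f x : ℝ) - f (x + 1)| ≤ C := by linarith
      exact_mod_cast this
    · intro x y hx hxy
      by_contra! hle
      have key : ∀ k, f (y + k) ≤ f x := by
        intro k
        induction k with
        | zero => exact hle
        | succ k ih =>
          by_contra! hlt
          have h1 := abs_le.1 (hstep (y + k) (by omega))
          have h2 := hlow x (y + k) hx (by omega)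
          have h3 : (f (y + k) : ℝ) ≤ f x := by exact_mod_cast ih
          have h4 : (f x : ℝ) < f (y + k + 1) := by exact_mod_cast hlt
          have h5 : |(f x : ℝ) - f (y + k)| ≤ A + B := by
            rw [abs_le]; constructor <;> linarith [h1.1]
          have h6 : A * (|(f x : ℝ) - f (y + k)| + B) ≤ A * (A + 2 * B) :=
            mul_le_mul_of_nonneg_left (by linarith) hA0.le
          have h7 : (x : ℝ) + C < y := by exact_mod_cast hxy
          push_cast at h2
          have h8 : (0 : ℝ) ≤ k := Nat.cast_nonneg _
          linarith
      obtain ⟨k, hk⟩ := exists_nat_gt (A * ((f x : ℝ) + B))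
      have h2 := hlow x (y + k) hx (by omega)
      have h3 : (f (y + k) : ℝ) ≤ f x := by exact_mod_cast key k
      have h0 : (0 : ℝ) ≤ f (y + k) := Nat.cast_nonneg _
      have h5 : |(f x : ℝ) - f (y + k)| ≤ f x := by
        rw [abs_le]; constructor <;> linarith
      have h6 : A * (|(f x : ℝ) - f (y + k)| + B) ≤ A * (f x + B) :=
        mul_le_mul_of_nonneg_left (by linarith) hA0.le
      have h7 : (x : ℝ) + C < y := by exact_mod_cast hxy
      push_cast at h2
      linarith
  · rintro ⟨C, hC, hf1, hs, hm⟩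
    have hup : ∀ x k : ℕ, 1 ≤ x → |(f x : ℤ) - f (x + k)| ≤ C * k := by
      intro x k hx
      induction k with
      | zero => simp
      | succ k ih =>
        have h1 := abs_le.1 (hs (x + k) (by omega))
        have h2 := abs_le.1 ih
        rw [← add_assoc, abs_le]
        push_cast
        constructor <;> linarith [h1.1, h1.2, h2.1, h2.2]
    have hgrow : ∀ x k : ℕ, 1 ≤ x → f x + k ≤ f (x + (C + 1) * k) := by
      intro x k hx
      induction k with
      | zero => simp
      | succ k ih =>
        have h1 := hm (x + (C + 1) * k) (x + (C + 1) * (k + 1)) (by omega)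
          (by rw [mul_add]; omega)
        omega
    have hC0 : (0 : ℝ) ≤ C := Nat.cast_nonneg _
    have main : ∀ x k : ℕ, 1 ≤ x →
        (1 / ((C : ℝ) + 1)) * k - ((C : ℝ) ^ 2 + 1) ≤ |(f x : ℝ) - f (x + k)| ∧
        |(f x : ℝ) - f (x + k)| ≤ ((C : ℝ) + 1) * k + ((C : ℝ) ^ 2 + 1) := by
      intro x k hx
      have hk0 : (0 : ℝ) ≤ k := Nat.cast_nonneg _
      constructor
      · have hdm := Nat.div_add_mod k (C + 1)
        have hr := Nat.mod_lt k (Nat.succ_pos C)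
        set q := k / (C + 1)
        set r := k % (C + 1)
        have h1 := hgrow x q hx
        have h2 := hup (x + (C + 1) * q) r (by omega)
        rw [add_assoc, hdm] at h2
        have h2' : |(f (x + (C + 1) * q) : ℝ) - f (x + k)| ≤ C * r := by exact_mod_cast h2
        have h1' : (f x : ℝ) + q ≤ f (x + (C + 1) * q) := by exact_mod_cast h1
        have hr' : (r : ℝ) ≤ C := by exact_mod_cast Nat.lt_succ_iff.1 hr
        have hk' : ((C : ℝ) + 1) * q + r = k := by exact_mod_cast hdm
        have h3 : (C : ℝ) * r ≤ C ^ 2 := by nlinarith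
        have h4 : (1 / ((C : ℝ) + 1)) * k ≤ q + 1 := by
          rw [one_div_mul_eq_div, div_le_iff₀ (by linarith)]
          nlinarith
        have h5 := (abs_le.1 h2').2
        have h6 := neg_abs_le ((f x : ℝ) - f (x + k))
        linarith
      · have h1 : |(f x : ℝ) - f (x + k)| ≤ C * k := by exact_mod_cast hup x k hx
        nlinarith [sq_nonneg (C : ℝ)]
    refine ⟨(C : ℝ) + 1, (C : ℝ) ^ 2 + 1, by linarith, by positivity, ?_, ?_⟩
    · intro x y hx hy
      rcases le_total x y with hxy | hxy
      · obtain ⟨k, rfl⟩ := Nat.exists_eq_add_of_le hxy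
        have h1 : |(x : ℝ) - ((x + k : ℕ) : ℝ)| = k := by
          push_cast
          rw [sub_add_cancel_left, abs_neg, Nat.abs_cast]
        rw [h1]
        exact main x k hx
      · obtain ⟨k, rfl⟩ := Nat.exists_eq_add_of_le hxy
        have h1 : |((y + k : ℕ) : ℝ) - (y : ℝ)| = k := by
          push_cast
          rw [add_sub_cancel_left, Nat.abs_cast]
        rw [h1, abs_sub_comm]
        exact main y k hy
    · intro y hy
      by_contra! hno
      have key : ∀ k, f (1 + k) < y := by
        intro k
        induction k with
        | zero =>
          by_contra! hge
          have h1 := hno 1 le_rfl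
          have h2 : |(f 1 : ℝ) - y| ≤ C := by
            have a1 : (y : ℝ) ≤ f 1 := by exact_mod_cast hge
            have a2 : (f 1 : ℝ) ≤ C := by exact_mod_cast hf1
            have a3 : (0 : ℝ) ≤ y := Nat.cast_nonneg _
            rw [abs_le]; constructor <;> linarith
          linarith
        | succ k ih =>
          by_contra! hge
          have h1 := hno (1 + k) (by omega)
          have h0 : |(f (1 + k) : ℝ) - f (1 + k + 1)| ≤ C := by
            exact_mod_cast hs (1 + k) (by omega)
          have a1 : (y : ℝ) ≤ f (1 + k + 1) := by exact_mod_cast hge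
          have a2 : (f (1 + k) : ℝ) < y := by exact_mod_cast ih
          have h2 : |(f (1 + k) : ℝ) - y| ≤ C := by
            rw [abs_le]; constructor <;> linarith [(abs_le.1 h0).1]
          linarith
      have h1 := hgrow 1 y le_rfl
      have h2 := key ((C + 1) * y)
      omega
end

section
/- Let Σ be a finite alphabet, let a ∈ Σ, let α and β be infinite strings over Σ, and let f be a C-quasi-isometry from α to β. Suppose there is a positive integer K such that every interval of K consecutive positions of α contains at least one occurrence of the letter a. Then every interval of K·C consecutive positions of β contains at least one occurrence of the letter a. -/
/-- If `f` is a `C`-quasi-isometry from `α` to `β` and every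
interval of `K` consecutive positions of `α` contains an occurrence of the letter
`a`, then every interval of `K·C` consecutive positions of `β` contains an
occurrence of `a`. -/
theorem letter_in_every_interval {Γ : Type*} [Fintype Γ] (a : Γ) (C : ℕ)
    (α β : ℕ → Γ) (f : ℕ → ℕ) (hf : IsQI C α β f) (K : ℕ) (hK : 1 ≤ K)
    (hα : ∀ p, 1 ≤ p → ∃ x, p ≤ x ∧ x < p + K ∧ α x = a) :
    ∀ p, 1 ≤ p → ∃ x, p ≤ x ∧ x < p + K * C ∧ β x = a := by
  obtain ⟨hC, _, hcol, h1, ha, hb⟩ := hf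
  intro p hp
  by_contra hno
  push Not at hno
  have step : ∀ x, 1 ≤ x → f (x + 1) ≤ f x + C := by
    intro x hx
    have := (abs_le.mp (ha x hx)).2
    omega
  have steps : ∀ d x, 1 ≤ x → f (x + d) ≤ f x + d * C := by
    intro d
    induction d with
    | zero => intro x _; simp
    | succ d ih =>
      intro x hx
      have e1 := ih x hx
      have e2 := step (x + d) (by omega)
      rw [← add_assoc, Nat.succ_mul]
      omega
  have grow : ∀ n, n ≤ f (1 + n * (C + 1)) := by
    intro n
    induction n with
    | zero => simp
    | succ n ih =>
      have := hb (1 + n * (C + 1)) (1 + (n + 1) * (C + 1)) (by omega)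
        (by rw [Nat.succ_mul]; omega)
      omega
  have key : ∀ n, ∃ x, n ≤ x ∧ 1 ≤ x ∧ f x < p := by
    have key' : ∀ n, ∃ x, n ≤ x ∧ 1 ≤ x ∧ α x = a ∧ f x < p := by
      intro n
      induction n with
      | zero =>
        obtain ⟨x, hx1, hx2, hxa⟩ := hα 1 le_rfl
        refine ⟨x, by omega, hx1, hxa, ?_⟩
        by_contra hlt
        refine hno (f x) (by omega) ?_ ((hcol x hx1).trans hxa)
        obtain ⟨d, rfl⟩ := Nat.exists_eq_add_of_le hx1
        have e1 := steps d 1 le_rfl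
        have e2 : (d + 1) * C ≤ K * C := Nat.mul_le_mul_right C (by omega)
        rw [Nat.succ_mul] at e2
        omega
      | succ n ih =>
        obtain ⟨x, hx, hx1, hxa, hxp⟩ := ih
        obtain ⟨y, hy1, hy2, hya⟩ := hα (x + 1) (by omega)
        refine ⟨y, by omega, by omega, hya, ?_⟩
        by_contra hlt
        refine hno (f y) (by omega) ?_ ((hcol y (by omega)).trans hya)
        obtain ⟨d, rfl⟩ := Nat.exists_eq_add_of_le (show x ≤ y by omega)
        have e1 := steps d x hx1
        have e2 : d * C ≤ K * C := Nat.mul_le_mul_right C (by omega)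
        omega
    intro n
    obtain ⟨x, h1, h2, _, h3⟩ := key' n
    exact ⟨x, h1, h2, h3⟩
  obtain ⟨x, hx, _, hxp⟩ := key (1 + p * (C + 1) + C + 1)
  have e1 := hb (1 + p * (C + 1)) x (by omega) (by omega)
  have e2 := grow p
  omega
end

section
/- (Small Cross-Over Lemma) Let α and β be infinite strings over a finite alphabet and let f be a C-quasi-isometry from α to β. Then for all positions n, m with n < m, f(n) − f(m) ≤ C², i.e. f(n) ≤ f(m) + C². -/
/-- Small Cross-Over Lemma. If `f` is a `C`-quasi-isometry from
`α` to `β`, then for all positions `n < m`, `f n − f m ≤ C²`. -/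
theorem small_crossover {Γ : Type*} [Fintype Γ] (C : ℕ) (α β : ℕ → Γ) (f : ℕ → ℕ)
    (hf : IsQI C α β f) :
    ∀ n m, 1 ≤ n → n < m → f n ≤ f m + C ^ 2 := by
  intro n m hn hnm
  obtain ⟨-, -, -, -, ha, hb⟩ := hf
  have key : ∀ k : ℕ, f n ≤ f (n + k) + k * C := by
    intro k
    induction k with
    | zero => simp
    | succ k ih =>
      have h := abs_le.mp (ha (n + k) (by omega))
      have h2 : f (n + k) ≤ f (n + k + 1) + C := by omega
      rw [← add_assoc, Nat.succ_mul]
      omega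
  by_cases h : n + C < m
  · have := hb n m hn h
    omega
  · obtain ⟨k, rfl⟩ := Nat.exists_eq_add_of_lt hnm
    have h1 := key (k + 1)
    have h2 : (k + 1) * C ≤ C * C := Nat.mul_le_mul_right C (by omega)
    rw [← add_assoc] at h1
    rw [pow_two]
    omega
end

section
/- Let α be an infinite string over a finite alphabet and let β and γ be two distinct infinite strings with β ≡_mqi α and γ ≡_mqi α. Then there exists an infinite string δ with δ ≡_mqi α such that β ≤_1qi δ and γ ≤_1qi δ. -/
theorem blow_up_aux {Γ : Type*} (α β : ℕ → Γ) (K C : ℕ) (f : ℕ → ℕ) (hK : C < K)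
    (hf : IsQI C β α f) (hc : Computable f) :
    OQIred β (fun p => α ((p - 1) / K + 1)) := by
  obtain ⟨h1, hpos, hcol, hf1, ha, hb⟩ := hf
  have hK0 : 0 < K := by omega
  have hdiv : ∀ x, (K * (f x - 1) + x % K + 1 - 1) / K = f x - 1 := by
    intro x
    rw [Nat.add_sub_cancel, Nat.mul_add_div hK0, Nat.div_eq_of_lt (Nat.mod_lt _ hK0)]
    simp
  refine ⟨K * C + K, fun x => K * (f x - 1) + x % K + 1, ⟨?_, ?_, ?_, ?_, ?_, ?_⟩, ?_, ?_⟩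
  · omega
  · intro x _; simp
  · intro x hx
    have := hpos x hx
    simp only [hdiv]
    rw [Nat.sub_add_cancel this, hcol x hx]
  · have : K * (f 1 - 1) ≤ K * (C - 1) := Nat.mul_le_mul_left _ (by omega)
    have h2 : K * (C - 1) + K = K * C := by
      rw [← Nat.mul_succ]; congr 1; omega
    have := Nat.mod_lt 1 hK0
    simp only
    omega
  · intro x hx
    have h2 := ha x hx
    have p1 := hpos x hx
    have p2 := hpos (x+1) (by omega)
    have m1 := Nat.mod_lt x hK0
    have m2 := Nat.mod_lt (x+1) hK0
    obtain ⟨a, ea⟩ : ∃ a, f x = a + 1 := ⟨f x - 1, by omega⟩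
    obtain ⟨b, eb⟩ : ∃ b, f (x+1) = b + 1 := ⟨f (x+1) - 1, by omega⟩
    simp only [ea, eb, Nat.add_sub_cancel] at h2 ⊢
    rw [abs_le] at h2
    push_cast at h2
    have u : K * b ≤ K * (a + C) := Nat.mul_le_mul_left _ (by omega)
    have v : K * a ≤ K * (b + C) := Nat.mul_le_mul_left _ (by omega)
    rw [Nat.mul_add] at u v
    generalize x % K = r at *
    generalize (x+1) % K = s at *
    rw [abs_le]
    constructor <;> omega
  · intro x y hx hxy
    have hC : C ≤ K * C := Nat.le_mul_of_pos_left _ hK0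
    have h2 := hb x y hx (by omega)
    have p1 := hpos x hx
    have m1 := Nat.mod_lt x hK0
    have : K * (f x - 1 + 1) ≤ K * (f y - 1) := Nat.mul_le_mul_left _ (by omega)
    rw [Nat.mul_succ] at this
    simp only
    omega
  · have hm : Computable (fun x : ℕ => x % K) :=
      (Primrec.nat_mod.comp Primrec.id (Primrec.const K)).to_comp
    have hs : Computable (fun x : ℕ => K * (f x - 1)) := by
      have : Computable (fun n : ℕ => K * (n - 1)) :=
        (Primrec.nat_mul.comp (Primrec.const K)
          (Primrec.nat_sub.comp Primrec.id (Primrec.const 1))).to_comp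
      exact this.comp hc
    exact Computable.succ.comp (Primrec.nat_add.to_comp.comp hs hm)
  · intro x y hx hy hxy
    simp only at hxy
    have e : f x - 1 = f y - 1 := by rw [← hdiv x, ← hdiv y, hxy]
    have e2 : x % K = y % K := by rw [e] at hxy; omega
    have p1 := hpos x hx
    have p2 := hpos y hy
    have i1 : ¬ x + C < y := fun h => by have := hb x y hx h; omega
    have i2 : ¬ y + C < x := fun h => by have := hb y x hy h; omega
    have d1 := Nat.div_add_mod x K
    have d2 := Nat.div_add_mod y K
    rcases lt_trichotomy (x / K) (y / K) with h | h | h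
    · have : K * (x / K + 1) ≤ K * (y / K) := Nat.mul_le_mul_left _ h
      rw [Nat.mul_succ] at this
      omega
    · rw [h] at d1; omega
    · have : K * (y / K + 1) ≤ K * (x / K) := Nat.mul_le_mul_left _ h
      rw [Nat.mul_succ] at this
      omega

theorem blow_down_aux {Γ : Type*} (α : ℕ → Γ) (K : ℕ) (hK0 : 0 < K) :
    MQIred (fun p => α ((p - 1) / K + 1)) α := by
  refine ⟨K, fun p => (p - 1) / K + 1, ⟨hK0, ?_, ?_, ?_, ?_, ?_⟩, ?_⟩
  · intro x _; simp
  · intro x _; rfl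
  · simp; omega
  · intro x hx
    obtain ⟨y, rfl⟩ : ∃ y, x = y + 1 := ⟨x - 1, by omega⟩
    simp only [Nat.add_sub_cancel]
    have h1 : y / K ≤ (y + 1) / K := Nat.div_le_div_right (by omega)
    have h2 : (y + 1) / K ≤ (y + K) / K := Nat.div_le_div_right (by omega)
    rw [Nat.add_div_right _ hK0] at h2
    rw [abs_le]
    generalize y / K = a at *
    generalize (y + 1) / K = b at *
    constructor <;> omega
  · intro x y hx hxy
    have h2 : (x - 1 + K) / K ≤ (y - 1) / K := Nat.div_le_div_right (by omega)
    rw [Nat.add_div_right _ hK0] at h2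
    simp only
    omega
  · exact (Primrec.succ.comp (Primrec.nat_div.comp
      (Primrec.nat_sub.comp Primrec.id (Primrec.const 1)) (Primrec.const K))).to_comp

/-- Any two distinct strings `β, γ` in the mqi-degree of `α` have a
common upper bound `δ` in that degree with respect to 1qi-reductions. -/
theorem mqi_degree_common_upper_bound {Γ : Type*} [Fintype Γ] (α β γ : ℕ → Γ)
    (hβγ : β ≠ γ) (hβ : MQIequiv β α) (hγ : MQIequiv γ α) :
    ∃ δ : ℕ → Γ, MQIequiv δ α ∧ OQIred β δ ∧ OQIred γ δ := by
  obtain ⟨⟨C, f, hf, hfc⟩, -⟩ := hβ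
  obtain ⟨⟨D, g, hg, hgc⟩, -⟩ := hγ
  refine ⟨fun p => α ((p - 1) / (C + D + 2) + 1), ⟨blow_down_aux α _ (by omega), ?_⟩,
    blow_up_aux α β _ C f (by omega) hf hfc, blow_up_aux α γ _ D g (by omega) hg hgc⟩
  obtain ⟨E, h, hh, hc, -⟩ := blow_up_aux α α (C + D + 2) 1 id (by omega)
    ⟨le_rfl, fun x hx => hx, fun x _ => rfl, le_rfl, fun x _ => by simp,
      fun x y _ h => by simp only [id]; omega⟩ Computable.id
  exact ⟨E, h, hh, hc⟩
end

section
/- Let α be an infinite string over a finite alphabet and let β and γ be two distinct infinite strings with β ≡_mqi α and γ ≡_mqi α. Then there exists an infinite string δ with δ ≡_mqi α such that δ ≤_1qi β and δ ≤_1qi γ. -/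
theorem IsQI.comp_aux {Γ : Type*} {C D : ℕ} {α β γ : ℕ → Γ} {f g : ℕ → ℕ}
    (hf : IsQI C α β f) (hg : IsQI D β γ g) : ∃ E, IsQI E α γ (fun x => g (f x)) := by
  obtain ⟨hC, f1, fc, f0, fa, fb⟩ := hf
  obtain ⟨hD, g1, gc, g0, ga, gb⟩ := hg
  have gs : ∀ k a, 1 ≤ a → |(g (a + k) : ℤ) - (g a : ℤ)| ≤ (k * D : ℤ) := by
    intro k
    induction k with
    | zero => intro a _; simp
    | succ k ih =>
      intro a ha
      have h1 := ih a ha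
      have h2 := ga (a + k) (by omega)
      rw [abs_le] at *
      push_cast
      rw [← add_assoc]
      constructor <;> linarith [h1.1, h1.2, h2.1, h2.2]
  have gs2 : ∀ a b, 1 ≤ a → a ≤ b → b ≤ a + C →
      |(g b : ℤ) - (g a : ℤ)| ≤ (C * D : ℤ) := by
    intro a b ha hab hb
    obtain ⟨k, rfl⟩ := Nat.exists_eq_add_of_le hab
    have hk : (k : ℤ) ≤ C := by omega
    have := gs k a ha
    have h3 : (k * D : ℤ) ≤ C * D := by gcongr
    linarith
  have fs : ∀ k x, 1 ≤ x → f x + k ≤ f (x + k * (C + 1)) := by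
    intro k
    induction k with
    | zero => intro x _; simp
    | succ k ih =>
      intro x hx
      have h1 := ih x hx
      have h2 := fb (x + k * (C + 1)) (x + (k + 1) * (C + 1)) (by omega) (by
        have : (k + 1) * (C + 1) = k * (C + 1) + (C + 1) := by ring
        omega)
      omega
  refine ⟨C * D + D + (D + 1) * (C + 1) + C, by omega, fun x hx => g1 _ (f1 x hx),
    fun x hx => (gc _ (f1 x hx)).trans (fc x hx), ?_, ?_, ?_⟩
  · have h := gs2 1 (f 1) le_rfl (f1 1 le_rfl) (by omega)
    rw [abs_le] at h
    have h2 : (g (f 1) : ℤ) ≤ ((C * D + D : ℕ) : ℤ) := by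
      push_cast
      have : (g 1 : ℤ) ≤ D := by exact_mod_cast g0
      linarith [h.2]
    have h3 : g (f 1) ≤ C * D + D := by exact_mod_cast h2
    show g (f 1) ≤ _
    omega
  · intro x hx
    have ha := fa x hx
    have hle : (C * D : ℤ) ≤ ((C * D + D + (D + 1) * (C + 1) + C : ℕ) : ℤ) := by
      have : C * D ≤ C * D + D + (D + 1) * (C + 1) + C := by omega
      exact_mod_cast this
    refine le_trans ?_ hle
    rw [abs_le] at ha
    rcases le_total (f x) (f (x + 1)) with h | h
    · exact gs2 _ _ (f1 x hx) h (by omega)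
    · rw [abs_sub_comm]
      exact gs2 _ _ (f1 (x + 1) (by omega)) h (by omega)
  · intro x y hx hxy
    have h1 := fs (D + 1) x hx
    have h2 := fb (x + (D + 1) * (C + 1)) y (by omega) (by omega)
    exact gb _ _ (f1 x hx) (by omega)

theorem MQIred.trans_aux {Γ : Type*} {α β γ : ℕ → Γ} (h1 : MQIred α β) (h2 : MQIred β γ) :
    MQIred α γ := by
  obtain ⟨C, f, hf, cf⟩ := h1
  obtain ⟨D, g, hg, cg⟩ := h2
  obtain ⟨E, hE⟩ := hf.comp_aux hg
  exact ⟨E, _, hE, cg.comp cf⟩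

theorem find_comp_aux {h : ℕ → ℕ → Bool} (hc : Computable₂ h) (hex : ∀ x, ∃ y, h x y = true) :
    ∃ r : ℕ → ℕ, Computable r ∧ ∀ x, h x (r x) = true ∧ ∀ y < r x, h x y = false := by
  classical
  refine ⟨fun x => Nat.find (hex x), ?_, fun x => ⟨Nat.find_spec (hex x), fun y hy => by
    simpa using Nat.find_min (hex x) hy⟩⟩
  have := Partrec.rfind (p := fun x y => Part.some (h x y)) hc
  refine Partrec.of_eq this fun x => ?_
  refine Part.eq_some_iff.2 (Nat.mem_rfind.2 ⟨?_, fun {m} hm => ?_⟩)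
  · simpa using Nat.find_spec (hex x)
  · simpa using Nat.find_min (hex x) hm

theorem core_aux {Γ : Type*} {β γ : ℕ → Γ} (H : MQIred β γ) :
    ∃ δ : ℕ → Γ, MQIred β δ ∧ OQIred δ β ∧ OQIred δ γ := by
  obtain ⟨C, f, hf, cf⟩ := H
  have hf' := hf
  obtain ⟨hC, f1, fc, f0, fa, fb⟩ := hf'
  have hdec : Computable₂ (fun a b : ℕ => decide (a = b)) :=
    (PrimrecRel.decide (Primrec.eq (α := ℕ))).to_comp
  obtain ⟨r, cr, hr⟩ := find_comp_aux (h := fun x y => decide (f (y + 1) = f (x + 1)))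
    (hdec.comp (cf.comp (Computable.succ.comp Computable.snd))
      (cf.comp (Computable.succ.comp Computable.fst))) (fun x => ⟨x, by simp⟩)
  simp only [decide_eq_true_eq, decide_eq_false_iff_not] at hr
  have r_le : ∀ x, r x ≤ x := fun x => by
    by_contra hlt
    exact (hr x).2 x (by omega) rfl
  have r_ge : ∀ x, x ≤ r x + C := fun x => by
    by_contra hlt
    have := fb (r x + 1) (x + 1) (by omega) (by omega)
    have := (hr x).1
    omega
  have r_inj : ∀ x y, r x = x → r y = y → f (x + 1) = f (y + 1) → x = y := by
    intro x y hx hy he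
    have h1 := (hr x).2 y
    have h2 := (hr y).2 x
    rw [hx] at h1
    rw [hy] at h2
    by_contra hne
    rcases Nat.lt_or_gt_of_ne hne with h | h
    · exact h2 h he
    · exact h1 h he.symm
  have r_idem : ∀ x, r (r x) = r x := by
    intro x
    have h1 := r_le (r x)
    by_contra hne
    exact (hr x).2 (r (r x)) (by omega) ((hr (r x)).1.trans (hr x).1)
  obtain ⟨c, cc, c0, cs⟩ : ∃ c : ℕ → ℕ, Computable c ∧ c 0 = 0 ∧
      ∀ x, c (x + 1) = c x + (if r x = x then 1 else 0) := by
    refine ⟨fun x => Nat.rec (motive := fun _ => ℕ) 0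
      (fun k ih => bif decide (r k = k) then ih + 1 else ih) x, ?_, rfl, ?_⟩
    · refine Computable.nat_rec (h := fun _ (p : ℕ × ℕ) =>
        bif decide (r p.1 = p.1) then p.2 + 1 else p.2) Computable.id (Computable.const 0) ?_
      refine Computable.cond ?_ ?_ ?_
      · exact hdec.comp (cr.comp (Computable.fst.comp Computable.snd))
          (Computable.fst.comp Computable.snd)
      · exact Computable.succ.comp (Computable.snd.comp Computable.snd)
      · exact Computable.snd.comp Computable.snd
    · intro x
      by_cases h : r x = x <;> simp [h]
  have c_rep : ∀ x, r x = x → c (x + 1) = c x + 1 := fun x hx => by rw [cs, if_pos hx]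
  have c_mono : Monotone c := monotone_nat_of_le_succ fun n => by rw [cs]; omega
  have c_step : ∀ k x, c (x + k) ≤ c x + k := by
    intro k
    induction k with
    | zero => intro x; simp
    | succ k ih =>
      intro x
      have := ih x
      rw [← add_assoc, cs]
      split_ifs <;> omega
  have c_gap : ∀ x, c x + 1 ≤ c (x + C + 1) := by
    intro x
    have h1 := c_mono (show x ≤ r (x + C) by have := r_ge (x + C); omega)
    have h2 := c_mono (show r (x + C) + 1 ≤ x + C + 1 by have := r_le (x + C); omega)
    have h3 := c_rep _ (r_idem (x + C))
    omega
  have c_unb : ∀ n, ∃ x, n ≤ c x := by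
    intro n
    induction n with
    | zero => exact ⟨0, by omega⟩
    | succ n ih =>
      obtain ⟨x, hx⟩ := ih
      exact ⟨x + C + 1, by have := c_gap x; omega⟩
  have c_hit : ∀ n, ∃ x, c (x + 1) = n + 1 := by
    intro n
    classical
    have hex := c_unb (n + 1)
    have h1 := Nat.find_spec hex
    obtain ⟨x, hx⟩ : ∃ x, Nat.find hex = x + 1 := Nat.exists_eq_succ_of_ne_zero (by
      intro h0
      rw [h0] at h1
      omega)
    have h2 := Nat.find_min hex (m := x) (by omega)
    rw [hx] at h1
    have := c_step 1 x
    exact ⟨x, by omega⟩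
  obtain ⟨e, ce, he⟩ := find_comp_aux (h := fun n x => decide (c (x + 1) = n + 1))
    (hdec.comp (cc.comp (Computable.succ.comp Computable.snd))
      (Computable.succ.comp Computable.fst)) (fun x => by simpa using c_hit x)
  simp only [decide_eq_true_eq, decide_eq_false_iff_not] at he
  have e_rep : ∀ n, r (e n) = e n := by
    intro n
    by_contra hne
    have h1 := (he n).1
    rw [cs, if_neg hne] at h1
    rcases Nat.eq_zero_or_pos (e n) with h0 | hp
    · rw [h0] at h1; omega
    · apply (he n).2 (e n - 1) (by omega)
      rw [Nat.sub_add_cancel hp]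
      exact h1
  have ce_eq : ∀ n, c (e n) = n := by
    intro n
    have := c_rep _ (e_rep n)
    have := (he n).1
    omega
  have e_mono : ∀ m n, m < n → e m < e n := by
    intro m n hmn
    by_contra hlt
    have := c_mono (show e n ≤ e m by omega)
    rw [ce_eq, ce_eq] at this
    omega
  have e_c : ∀ y, r y = y → e (c y) = y := by
    intro y hy
    have h1 := c_rep y hy
    have h2 := (he (c y)).1
    have h3 := ce_eq (c y)
    rcases lt_trichotomy (e (c y)) y with h | h | h
    · have := c_mono (show e (c y) + 1 ≤ y by omega); omega
    · exact h
    · have := c_mono (show y + 1 ≤ e (c y) by omega); omega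
  have e0 : e 0 = 0 := by
    have := e_c 0 (by have := r_le 0; omega)
    rwa [c0] at this
  have e_gap : ∀ n, e (n + 1) ≤ e n + C + 1 := by
    intro n
    by_contra hlt
    have h1 := c_mono (show e n + 1 + C + 1 ≤ e (n + 1) by omega)
    have h2 := c_gap (e n + 1)
    have h3 := (he n).1
    have h4 := ce_eq (n + 1)
    omega
  have cpred : Computable Nat.pred := Primrec.pred.to_comp
  let i : ℕ → ℕ := fun n => e (n - 1) + 1
  let δ : ℕ → Γ := fun n => β (i n)
  have ci : Computable i := Computable.succ.comp (ce.comp cpred)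
  have i_mono : ∀ x y, 1 ≤ x → x < y → i x < i y := by
    intro x y hx hxy
    have := e_mono (x - 1) (y - 1) (by omega)
    simp only [i]; omega
  have i_inj : ∀ x y, 1 ≤ x → 1 ≤ y → i x = i y → x = y := by
    intro x y hx hy h
    rcases lt_trichotomy x y with h' | h' | h'
    · have := i_mono x y hx h'; omega
    · exact h'
    · have := i_mono y x hy h'; omega
  have hi : IsQI (C + 1) δ β i := by
    refine ⟨by omega, fun x hx => by simp only [i]; omega, fun x hx => rfl, ?_, ?_, ?_⟩
    · simp only [i, e0, Nat.sub_self]; omega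
    · intro x hx
      obtain ⟨k, rfl⟩ : ∃ k, x = k + 1 := ⟨x - 1, by omega⟩
      have h1 := e_gap k
      have h2 := e_mono k (k + 1) (by omega)
      simp only [i, Nat.add_sub_cancel]
      rw [abs_le]
      push_cast
      constructor <;> omega
    · intro x y hx hxy
      exact i_mono x y hx (by omega)
  refine ⟨δ, ⟨2 * C + 1, fun x => c (r (x - 1)) + 1, ⟨by omega, fun x hx => by simp, ?_, ?_, ?_, ?_⟩,
    Computable.succ.comp (cc.comp (cr.comp cpred))⟩, ⟨C + 1, i, hi, ci, i_inj⟩, ?_⟩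
  · intro x hx
    obtain ⟨k, rfl⟩ : ∃ k, x = k + 1 := ⟨x - 1, by omega⟩
    simp only [δ, i, Nat.add_sub_cancel]
    rw [e_c _ (r_idem k), ← fc _ (by omega : 1 ≤ r k + 1), ← fc _ hx, (hr k).1]
  · have : r 0 = 0 := by have := r_le 0; omega
    simp [this, c0]
  · intro x hx
    obtain ⟨k, rfl⟩ : ∃ k, x = k + 1 := ⟨x - 1, by omega⟩
    have key : ∀ k, c (r k) ≤ c k ∧ c k ≤ c (r k) + C := by
      intro k
      refine ⟨c_mono (r_le k), ?_⟩
      have h1 := c_mono (r_ge k)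
      have h2 := c_step C (r k)
      omega
    have h1 := key k
    have h2 := key (k + 1)
    have h3 := c_step 1 k
    have h4 := c_mono (show k ≤ k + 1 by omega)
    simp only [Nat.add_sub_cancel]
    rw [abs_le]
    push_cast
    constructor <;> omega
  · intro x y hx hxy
    have h1 := c_mono (r_le (x - 1))
    have h2 := c_gap (x - 1)
    have h3 := r_ge (y - 1)
    have h4 := c_mono (show x - 1 + C + 1 ≤ r (y - 1) by omega)
    show c (r (x - 1)) + 1 < c (r (y - 1)) + 1
    omega
  · obtain ⟨E, hE⟩ := hi.comp_aux hf
    refine ⟨E, _, hE, cf.comp ci, ?_⟩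
    intro x y hx hy h
    apply i_inj x y hx hy
    have := r_inj _ _ (e_rep (x - 1)) (e_rep (y - 1)) h
    simp only [i, this]

/-- Any two distinct strings `β, γ` in the mqi-degree of `α` have a
common lower bound `δ` in that degree with respect to 1qi-reductions. -/
theorem mqi_degree_common_lower_bound {Γ : Type*} [Fintype Γ] (α β γ : ℕ → Γ)
    (hβγ : β ≠ γ) (hβ : MQIequiv β α) (hγ : MQIequiv γ α) :
    ∃ δ : ℕ → Γ, MQIequiv δ α ∧ OQIred δ β ∧ OQIred δ γ := by
  obtain ⟨δ, h1, h2, h3⟩ := core_aux (hβ.1.trans_aux hγ.2)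
  obtain ⟨C, f, hf, cf, _⟩ := h2
  have h2' : MQIred δ β := ⟨C, f, hf, cf⟩
  exact ⟨δ, ⟨h2'.trans_aux hβ.1, hβ.2.trans_aux h1⟩, ⟨C, f, hf, cf, ‹_›⟩, h3⟩
end

section
/- Let Σ = {0,1} and let α = 10^ω (the string with 1 at position 1 and 0 at all other positions). Then: (i) an infinite string β over Σ satisfies β ≡_mqi α if and only if β contains a finite, positive number of occurrences of 1; (ii) every β with β ≡_mqi α satisfies β ≡_1qi 1^k 0^ω for exactly one k ≥ 1, namely k equal to the number of occurrences of 1 in β; (iii) for all 1 ≤ j < k, 1^j 0^ω ≤_1qi 1^k 0^ω but 1^k 0^ω is not 1qi-reducible to 1^j 0^ω. Hence [α]_mqi is the union of a strictly ascending chain of 1qi-degrees [1 0^ω]_1qi < [1 1 0^ω]_1qi < [1 1 1 0^ω]_1qi < ⋯. -/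
/-- The string `1^k 0^ω` over `{0,1}`: the letter `1` at positions `1, …, k` and `0`
at all other positions. -/
def onesStr (k : ℕ) : ℕ → Fin 2 := fun n => if 1 ≤ n ∧ n ≤ k then 1 else 0

theorem aux_primrec (N : ℕ) : ∀ (c : ℕ) (f : ℕ → ℕ), (∀ x, N ≤ x → f x = c + x) → Primrec f := by
  induction N with
  | zero =>
    intro c f h
    have : f = fun x => c + x := by funext x; exact h x (Nat.zero_le x)
    rw [this]
    exact Primrec.nat_add.comp (Primrec.const c) Primrec.id
  | succ N ih =>
    intro c f h
    have h1 : Primrec (fun x => f (x + 1)) := by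
      apply ih (c + 1)
      intro x hx
      rw [h (x + 1) (by omega)]
      omega
    refine (Primrec.nat_casesOn₁ (f 0) h1).of_eq ?_
    intro n
    cases n <;> rfl

theorem aux_qi (A B : ℕ → Fin 2) (N : ℕ) (g : ℕ → ℕ)
    (hA : ∀ x, 1 ≤ x → A x = 1 → x ≤ N) (hB : ∀ x, 1 ≤ x → B x = 1 → x ≤ N)
    (hg : ∀ x, 1 ≤ x → A x = 1 → 1 ≤ g x ∧ B (g x) = 1) :
    ∃ C f, IsQI C A B f ∧ Computable f ∧
      (Set.InjOn g {x : ℕ | 1 ≤ x ∧ A x = 1} →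
        ∀ x y, 1 ≤ x → 1 ≤ y → f x = f y → x = y) := by
  have hgN : ∀ x, 1 ≤ x → A x = 1 → g x ≤ N := fun x hx h => hB _ (hg x hx h).1 (hg x hx h).2
  let f : ℕ → ℕ := fun x => if 1 ≤ x ∧ A x = 1 then g x else N + x
  have f1 : ∀ x, 1 ≤ x → A x = 1 → f x = g x := fun x hx h => if_pos ⟨hx, h⟩
  have f0 : ∀ x, A x ≠ 1 → f x = N + x := fun x h => if_neg (fun h' => h h'.2)
  have fbig : ∀ x, N < x → f x = N + x := by
    intro x hx
    apply f0
    intro h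
    have := hA x (by omega) h
    omega
  have fle : ∀ x, 1 ≤ x → f x ≤ N + x := by
    intro x hx
    by_cases h : A x = 1
    · rw [f1 x hx h]; have := hgN x hx h; omega
    · rw [f0 x h]
  refine ⟨2 * N + 2, f, ⟨by omega, ?_, ?_, ?_, ?_, ?_⟩, ?_, ?_⟩
  · intro x hx
    by_cases h : A x = 1
    · rw [f1 x hx h]; exact (hg x hx h).1
    · rw [f0 x h]; omega
  · intro x hx
    by_cases h : A x = 1
    · rw [f1 x hx h, h]; exact (hg x hx h).2
    · rw [f0 x h]
      have h2 : B (N + x) ≠ 1 := by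
        intro h'
        have := hB _ (by omega) h'
        omega
      omega
  · have := fle 1 le_rfl
    omega
  · intro x hx
    rw [abs_le]
    by_cases h : N < x
    · rw [fbig x h, fbig (x + 1) (by omega)]
      push_cast
      constructor <;> omega
    · have a := fle x hx
      have b := fle (x + 1) (by omega)
      push_cast
      constructor <;> omega
  · intro x y hx hxy
    have a := fle x hx
    rw [fbig y (by omega)]
    omega
  · exact (aux_primrec (N + 1) N f (fun x hx => fbig x (by omega))).to_comp
  · intro hinj x y hx hy hxy
    by_cases h : A x = 1 <;> by_cases h' : A y = 1
    · rw [f1 x hx h, f1 y hy h'] at hxy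
      exact hinj ⟨hx, h⟩ ⟨hy, h'⟩ hxy
    · rw [f1 x hx h, f0 y h'] at hxy
      have := hgN x hx h
      omega
    · rw [f0 x h, f1 y hy h'] at hxy
      have := hgN y hy h'
      omega
    · rw [f0 x h, f0 y h'] at hxy
      omega

theorem aux_bound (A : ℕ → Fin 2) (h : {x : ℕ | 1 ≤ x ∧ A x = 1}.Finite) :
    ∃ N, ∀ x, 1 ≤ x → A x = 1 → x ≤ N := by
  obtain ⟨N, hN⟩ := h.bddAbove
  exact ⟨N, fun x hx hA => hN ⟨hx, hA⟩⟩

theorem aux_oqi (A B : ℕ → Fin 2) (hA : {x : ℕ | 1 ≤ x ∧ A x = 1}.Finite)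
    (hB : {x : ℕ | 1 ≤ x ∧ B x = 1}.Finite)
    (h : {x : ℕ | 1 ≤ x ∧ A x = 1}.ncard ≤ {x : ℕ | 1 ≤ x ∧ B x = 1}.ncard) :
    OQIred A B := by
  obtain ⟨N, hN⟩ := aux_bound A hA
  obtain ⟨M, hM⟩ := aux_bound B hB
  have h' : {x : ℕ | 1 ≤ x ∧ A x = 1}.encard ≤ {x : ℕ | 1 ≤ x ∧ B x = 1}.encard := by
    rw [← hA.cast_ncard_eq, ← hB.cast_ncard_eq]
    exact_mod_cast h
  obtain ⟨g, hg, hinj⟩ := hA.exists_injOn_of_encard_le h'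
  obtain ⟨C, f, h1, h2, h3⟩ := aux_qi A B (max N M) g
    (fun x hx h => (hN x hx h).trans (le_max_left _ _))
    (fun x hx h => (hM x hx h).trans (le_max_right _ _))
    (fun x hx h => hg ⟨hx, h⟩)
  exact ⟨C, f, h1, h2, h3 hinj⟩

theorem aux_ncard (A B : ℕ → Fin 2) (hB : {x : ℕ | 1 ≤ x ∧ B x = 1}.Finite)
    (h : OQIred A B) :
    {x : ℕ | 1 ≤ x ∧ A x = 1}.ncard ≤ {x : ℕ | 1 ≤ x ∧ B x = 1}.ncard := by
  obtain ⟨C, f, ⟨_, hp, hc, _⟩, _, hinj⟩ := h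
  refine Set.ncard_le_ncard_of_injOn f ?_ ?_ hB
  · rintro x ⟨hx, hA⟩
    exact ⟨hp x hx, (hc x hx).trans hA⟩
  · rintro x ⟨hx, _⟩ y ⟨hy, _⟩ hxy
    exact hinj x y hx hy hxy

theorem aux_ones (k : ℕ) : {x : ℕ | 1 ≤ x ∧ onesStr k x = 1} = Set.Icc 1 k := by
  ext x
  simp only [onesStr, Set.mem_ofPred_eq, Set.mem_Icc]
  by_cases h : 1 ≤ x ∧ x ≤ k <;> simp [h]

theorem aux_ones_fin (k : ℕ) : {x : ℕ | 1 ≤ x ∧ onesStr k x = 1}.Finite := by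
  rw [aux_ones]; exact Set.finite_Icc 1 k

theorem aux_ones_card (k : ℕ) : {x : ℕ | 1 ≤ x ∧ onesStr k x = 1}.ncard = k := by
  rw [aux_ones, Set.ncard_eq_toFinset_card']; simp

theorem aux_i (β : ℕ → Fin 2) : MQIequiv β (onesStr 1) ↔
    ({x : ℕ | 1 ≤ x ∧ β x = 1}.Finite ∧ {x : ℕ | 1 ≤ x ∧ β x = 1}.Nonempty) := by
  constructor
  · rintro ⟨⟨C, f, ⟨_, hp, hc, _, _, hb⟩, _⟩, ⟨C', f', ⟨_, hp', hc', _⟩, _⟩⟩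
    constructor
    · refine (Set.finite_Iic (1 + C)).subset ?_
      rintro x ⟨hx, h⟩
      by_contra hn
      simp only [Set.mem_Iic, not_le] at hn
      have h1 := hb 1 x le_rfl hn
      have h2 := hp 1 le_rfl
      have h3 : f x ∈ {x : ℕ | 1 ≤ x ∧ onesStr 1 x = 1} := ⟨hp x hx, (hc x hx).trans h⟩
      rw [aux_ones] at h3
      have := h3.2
      omega
    · exact ⟨f' 1, hp' 1 le_rfl, (hc' 1 le_rfl).trans (by simp [onesStr])⟩
  · rintro ⟨hf, hne⟩
    constructor
    · obtain ⟨N, hN⟩ := aux_bound β hf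
      obtain ⟨M, hM⟩ := aux_bound _ (aux_ones_fin 1)
      obtain ⟨C, f, h1, h2, _⟩ := aux_qi β (onesStr 1) (max N M) (fun _ => 1)
        (fun x hx h => (hN x hx h).trans (le_max_left _ _))
        (fun x hx h => (hM x hx h).trans (le_max_right _ _))
        (fun x hx h => ⟨le_rfl, by simp [onesStr]⟩)
      exact ⟨C, f, h1, h2⟩
    · obtain ⟨C, f, h1, h2, _⟩ := aux_oqi (onesStr 1) β (aux_ones_fin 1) hf (by
        rw [aux_ones_card]
        exact (Set.ncard_pos hf).2 hne)
      exact ⟨C, f, h1, h2⟩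

/-- With `α = 1 0^ω`:
(i) `β ≡_mqi α` iff `β` has a finite, positive number of occurrences of `1`;
(ii) each `β ≡_mqi α` is 1qi-equivalent to `1^k 0^ω` exactly for `k` equal to the
number of occurrences of `1` in `β`;
(iii) for `1 ≤ j < k`, `1^j 0^ω ≤_1qi 1^k 0^ω` but not conversely.
Hence `[α]_mqi` is the union of a strictly ascending chain of 1qi-degrees. -/
theorem mqi_degree_union_ascending_chain :
    (∀ β : ℕ → Fin 2, MQIequiv β (onesStr 1) ↔
        ({x : ℕ | 1 ≤ x ∧ β x = 1}.Finite ∧ {x : ℕ | 1 ≤ x ∧ β x = 1}.Nonempty)) ∧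
    (∀ β : ℕ → Fin 2, MQIequiv β (onesStr 1) →
        ∀ k, 1 ≤ k →
          (OQIequiv β (onesStr k) ↔ k = {x : ℕ | 1 ≤ x ∧ β x = 1}.ncard)) ∧
    (∀ j k, 1 ≤ j → j < k →
        OQIred (onesStr j) (onesStr k) ∧ ¬ OQIred (onesStr k) (onesStr j)) := by
  refine ⟨aux_i, ?_, ?_⟩
  · intro β h k hk
    obtain ⟨hf, hne⟩ := (aux_i β).1 h
    constructor
    · rintro ⟨h1, h2⟩
      have a := aux_ncard _ _ (aux_ones_fin k) h1
      have b := aux_ncard _ _ hf h2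
      rw [aux_ones_card] at a b
      omega
    · intro hk'
      constructor
      · exact aux_oqi _ _ hf (aux_ones_fin k) (by rw [aux_ones_card]; omega)
      · exact aux_oqi _ _ (aux_ones_fin k) hf (by rw [aux_ones_card]; omega)
  · intro j k hj hjk
    constructor
    · exact aux_oqi _ _ (aux_ones_fin j) (aux_ones_fin k)
        (by rw [aux_ones_card, aux_ones_card]; omega)
    · intro h
      have a := aux_ncard _ _ (aux_ones_fin j) h
      rw [aux_ones_card, aux_ones_card] at a
      omega
end

section
/- Let Σ = {0,1,2} and let α = 120^ω (the string with 1 at position 1, 2 at position 2, and 0 at all other positions). Then: (i) an infinite string β over Σ satisfies β ≡_mqi α if and only if β contains a finite, positive number of occurrences of 1 and a finite, positive number of occurrences of 2; (ii) every β with β ≡_mqi α satisfies β ≡_1qi 1^i 2^j 0^ω for exactly one pair (i, j) with i, j ≥ 1; (iii) for all i, i', j, j' ≥ 1, 1^i 2^j 0^ω ≤_1qi 1^{i'} 2^{j'} 0^ω if and only if i ≤ i' and j ≤ j'. Hence the poset of 1qi-degrees contained in [α]_mqi is order-isomorphic to ℕ × ℕ with the componentwise ordering. -/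
/-- The string `1^i 2^j 0^ω` over `{0,1,2}`: the letter `1` at positions `1, …, i`,
the letter `2` at positions `i+1, …, i+j`, and `0` at all other positions. -/
def ijStr (i j : ℕ) : ℕ → Fin 3 := fun n =>
  if 1 ≤ n ∧ n ≤ i then 1 else if i < n ∧ n ≤ i + j then 2 else 0

theorem aux_computable (f : ℕ → ℕ) (N K : ℕ) (h : ∀ x, N < x → f x = x + K) :
    Computable f := by
  have h1 : Primrec (fun x : ℕ => if x ≤ N then ((List.range (N+1)).map f).getD x 0 else x + K) := by
    refine Primrec.ite (Primrec.nat_le.comp Primrec.id (Primrec.const N)) ?_ ?_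
    · exact (Primrec.list_getD 0).comp (Primrec.const _) Primrec.id
    · exact Primrec.nat_add.comp Primrec.id (Primrec.const K)
  refine (h1.of_eq ?_).to_comp
  intro x
  by_cases hx : x ≤ N
  · have : x < N + 1 := by omega
    simp [hx, List.getD, this]
  · simp [hx, h x (by omega)]

theorem aux_isQI (α β : ℕ → Fin 3) (f : ℕ → ℕ) (N K : ℕ) (h : ∀ x, N < x → f x = x + K)
    (h1 : ∀ x, 1 ≤ x → 1 ≤ f x) (h2 : ∀ x, 1 ≤ x → f x ≤ x + K)
    (hc : ∀ x, 1 ≤ x → β (f x) = α x) : IsQI (N + K + 1) α β f := by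
  refine ⟨by omega, h1, hc, ?_, ?_, ?_⟩
  · have := h2 1 le_rfl
    omega
  · intro x hx
    have a1 := h2 x hx
    have a2 := h2 (x+1) (by omega)
    by_cases hN : N < x
    · rw [h x hN, h (x+1) (by omega), abs_le]
      push_cast
      constructor <;> linarith
    · rw [abs_le]
      constructor <;> push_cast <;> omega
  · intro x y hx hy
    have := h2 x hx
    rw [h y (by omega)]
    omega

theorem fin3_zero (a : Fin 3) (h1 : a ≠ 1) (h2 : a ≠ 2) : a = 0 := by
  revert a; decide

theorem aux_construct (α β : ℕ → Fin 3) (N M : ℕ) (hα : ∀ x, N < x → α x = 0)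
    (hβ : ∀ x, M < x → β x = 0) (e1 e2 : ℕ → ℕ)
    (he1 : ∀ x, 1 ≤ x → α x = 1 → 1 ≤ e1 x ∧ β (e1 x) = 1)
    (he2 : ∀ x, 1 ≤ x → α x = 2 → 1 ≤ e2 x ∧ β (e2 x) = 2) :
    ∃ C f, IsQI C α β f ∧ Computable f ∧
      ∀ x, 1 ≤ x → (α x = 1 → f x = e1 x) ∧ (α x = 2 → f x = e2 x) ∧
        (α x = 0 → ∀ y, 1 ≤ y → α y = 0 → f x = f y → x = y) := by
  obtain ⟨K, hMK, hK⟩ : ∃ K, M ≤ K ∧ ∀ x ≤ N, e1 x ≤ K ∧ e2 x ≤ K := by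
    refine ⟨M + ∑ x ∈ Finset.range (N+1), (e1 x + e2 x), by omega, ?_⟩
    intro x hx
    have := Finset.single_le_sum (f := fun x => e1 x + e2 x) (s := Finset.range (N+1))
      (fun _ _ => Nat.zero_le _) (Finset.mem_range.2 (Nat.lt_succ_of_le hx))
    omega
  let f : ℕ → ℕ := fun x => if α x = 1 then e1 x else if α x = 2 then e2 x else x + K
  have hf0 : ∀ x, α x = 0 → f x = x + K := fun x hx => by simp [f, hx]
  have hf1 : ∀ x, α x = 1 → f x = e1 x := fun x hx => by simp [f, hx]
  have hf2 : ∀ x, α x = 2 → f x = e2 x := fun x hx => by simp [f, hx]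
  have hle : ∀ x, α x ≠ 0 → x ≤ N := fun x hx => by
    by_contra hh
    exact hx (hα x (by omega))
  have hf : ∀ x, N < x → f x = x + K := fun x hx => hf0 x (hα x hx)
  have key : ∀ x, 1 ≤ x → 1 ≤ f x ∧ f x ≤ x + K ∧ β (f x) = α x := by
    intro x hx
    by_cases c1 : α x = 1
    · have := he1 x hx c1
      have h2 := hK x (hle x (by rw [c1]; decide))
      rw [hf1 x c1, c1]
      exact ⟨this.1, by omega, this.2⟩
    by_cases c2 : α x = 2
    · have := he2 x hx c2
      have h2 := hK x (hle x (by rw [c2]; decide))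
      rw [hf2 x c2, c2]
      exact ⟨this.1, by omega, this.2⟩
    · have c0 := fin3_zero _ c1 c2
      rw [hf0 x c0, c0]
      exact ⟨by omega, le_rfl, hβ _ (by omega)⟩
  refine ⟨N + K + 1, f, aux_isQI α β f N K hf (fun x hx => (key x hx).1)
    (fun x hx => (key x hx).2.1) (fun x hx => (key x hx).2.2), aux_computable f N K hf, ?_⟩
  intro x hx
  refine ⟨hf1 x, hf2 x, ?_⟩
  intro c y hy c' hxy
  rw [hf0 x c, hf0 y c'] at hxy
  omega

def cset (α : ℕ → Fin 3) (c : Fin 3) : Set ℕ := {x | 1 ≤ x ∧ α x = c}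

theorem aux_bound_s8 (α : ℕ → Fin 3) (h1 : (cset α 1).Finite) (h2 : (cset α 2).Finite) :
    ∃ N, ∀ x, N < x → α x = 0 := by
  obtain ⟨a, ha⟩ := h1.bddAbove
  obtain ⟨b, hb⟩ := h2.bddAbove
  refine ⟨a + b, fun x hx => fin3_zero _ ?_ ?_⟩
  · intro h
    have : x ≤ a := ha ⟨by omega, h⟩
    omega
  · intro h
    have : x ≤ b := hb ⟨by omega, h⟩
    omega

theorem aux_inj (α β : ℕ → Fin 3) (c : Fin 3) (hα : (cset α c).Finite)
    (h : (cset α c).ncard ≤ (cset β c).ncard) (hβ : (cset β c).Finite) :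
    ∃ e : ℕ → ℕ, (∀ x, 1 ≤ x → α x = c → 1 ≤ e x ∧ β (e x) = c) ∧ Set.InjOn e (cset α c) := by
  have : (cset α c).encard ≤ (cset β c).encard := by
    rw [← hα.cast_ncard_eq, ← hβ.cast_ncard_eq]
    exact_mod_cast h
  obtain ⟨e, he, hi⟩ := hα.exists_injOn_of_encard_le this
  exact ⟨e, fun x hx hc => he (show x ∈ cset α c from ⟨hx, hc⟩), hi⟩

theorem aux_oqi_s8 (α β : ℕ → Fin 3) (a1 : (cset α 1).Finite) (a2 : (cset α 2).Finite)
    (b1 : (cset β 1).Finite) (b2 : (cset β 2).Finite) :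
    OQIred α β ↔ (cset α 1).ncard ≤ (cset β 1).ncard ∧ (cset α 2).ncard ≤ (cset β 2).ncard := by
  constructor
  · rintro ⟨C, f, hf, -, hinj⟩
    have : ∀ c, (cset β c).Finite → (cset α c).ncard ≤ (cset β c).ncard := by
      intro c hc
      refine Set.ncard_le_ncard_of_injOn f ?_ ?_ hc
      · rintro x ⟨hx, hxc⟩
        exact ⟨hf.2.1 x hx, (hf.2.2.1 x hx).trans hxc⟩
      · rintro x ⟨hx, -⟩ y ⟨hy, -⟩ hxy
        exact hinj x y hx hy hxy
    exact ⟨this 1 b1, this 2 b2⟩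
  · rintro ⟨h1, h2⟩
    obtain ⟨N, hN⟩ := aux_bound_s8 α a1 a2
    obtain ⟨M, hM⟩ := aux_bound_s8 β b1 b2
    obtain ⟨e1, he1, hi1⟩ := aux_inj α β 1 a1 h1 b1
    obtain ⟨e2, he2, hi2⟩ := aux_inj α β 2 a2 h2 b2
    obtain ⟨C, f, hf, hcomp, hfe⟩ := aux_construct α β N M hN hM e1 e2 he1 he2
    refine ⟨C, f, hf, hcomp, ?_⟩
    intro x y hx hy hxy
    have hc : α x = α y := by
      rw [← hf.2.2.1 x hx, ← hf.2.2.1 y hy, hxy]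
    by_cases c1 : α x = 1
    · have c1' := hc ▸ c1
      rw [(hfe x hx).1 c1, (hfe y hy).1 c1'] at hxy
      exact hi1 ⟨hx, c1⟩ ⟨hy, c1'⟩ hxy
    by_cases c2 : α x = 2
    · have c2' := hc ▸ c2
      rw [(hfe x hx).2.1 c2, (hfe y hy).2.1 c2'] at hxy
      exact hi2 ⟨hx, c2⟩ ⟨hy, c2'⟩ hxy
    · have c0 := fin3_zero _ c1 c2
      exact (hfe x hx).2.2 c0 y hy (hc ▸ c0) hxy

theorem aux_mqi (α β : ℕ → Fin 3) (a1 : (cset α 1).Finite) (a2 : (cset α 2).Finite)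
    (b1 : (cset β 1).Finite) (b2 : (cset β 2).Finite)
    (n1 : (cset β 1).Nonempty) (n2 : (cset β 2).Nonempty) : MQIred α β := by
  obtain ⟨N, hN⟩ := aux_bound_s8 α a1 a2
  obtain ⟨M, hM⟩ := aux_bound_s8 β b1 b2
  obtain ⟨p, hp⟩ := n1
  obtain ⟨q, hq⟩ := n2
  obtain ⟨C, f, hf, hcomp, -⟩ := aux_construct α β N M hN hM (fun _ => p) (fun _ => q)
    (fun _ _ _ => hp) (fun _ _ _ => hq)
  exact ⟨C, f, hf, hcomp⟩

theorem cset_ij1 (i j : ℕ) : cset (ijStr i j) 1 = Set.Icc 1 i := by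
  ext x
  simp only [cset, ijStr, Set.mem_ofPred_eq, Set.mem_Icc]
  split_ifs with h h'
  · simp [h]
  · simp; omega
  · simp; omega

theorem cset_ij2 (i j : ℕ) : cset (ijStr i j) 2 = Set.Ioc i (i + j) := by
  ext x
  simp only [cset, ijStr, Set.mem_ofPred_eq, Set.mem_Ioc]
  split_ifs with h h'
  · simp; omega
  · simp; omega
  · simp; omega

theorem ij_facts (i j : ℕ) : (cset (ijStr i j) 1).Finite ∧ (cset (ijStr i j) 2).Finite ∧
    (cset (ijStr i j) 1).ncard = i ∧ (cset (ijStr i j) 2).ncard = j := by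
  rw [cset_ij1, cset_ij2]
  refine ⟨Set.finite_Icc _ _, Set.finite_Ioc _ _, ?_, ?_⟩
  · rw [← Finset.coe_Icc, Set.ncard_coe_finset]; simp
  · rw [← Finset.coe_Ioc, Set.ncard_coe_finset]; simp

theorem mqi_fin (α β : ℕ → Fin 3) (h : MQIred α β) (c : Fin 3) (hb : (cset β c).Finite) :
    (cset α c).Finite := by
  obtain ⟨C, f, hf, -⟩ := h
  refine Set.Finite.of_finite_fibers f (hb.subset ?_) ?_
  · rintro _ ⟨x, ⟨hx, hxc⟩, rfl⟩
    exact ⟨hf.2.1 x hx, (hf.2.2.1 x hx).trans hxc⟩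
  · rintro _ ⟨x, ⟨hx, hxc⟩, rfl⟩
    refine (Set.finite_Iic (x + C)).subset ?_
    rintro y ⟨-, hy⟩
    by_contra hh
    have := hf.2.2.2.2.2 x y hx (by simpa using hh)
    have hy : f y = f x := hy
    omega

theorem mqi_ne (α β : ℕ → Fin 3) (h : MQIred α β) (c : Fin 3) (hb : (cset α c).Nonempty) :
    (cset β c).Nonempty := by
  obtain ⟨C, f, hf, -⟩ := h
  obtain ⟨x, hx, hxc⟩ := hb
  exact ⟨f x, hf.2.1 x hx, (hf.2.2.1 x hx).trans hxc⟩

theorem part_one (β : ℕ → Fin 3) : MQIequiv β (ijStr 1 1) ↔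
    ((cset β 1).Finite ∧ (cset β 1).Nonempty ∧ (cset β 2).Finite ∧ (cset β 2).Nonempty) := by
  obtain ⟨f1, f2, -, -⟩ := ij_facts 1 1
  have n1 : (cset (ijStr 1 1) 1).Nonempty := by rw [cset_ij1]; exact ⟨1, by simp⟩
  have n2 : (cset (ijStr 1 1) 2).Nonempty := by rw [cset_ij2]; exact ⟨2, by simp⟩
  constructor
  · rintro ⟨h, h'⟩
    exact ⟨mqi_fin _ _ h 1 f1, mqi_ne _ _ h' 1 n1, mqi_fin _ _ h 2 f2, mqi_ne _ _ h' 2 n2⟩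
  · rintro ⟨a, b, c, d⟩
    exact ⟨aux_mqi _ _ a c f1 f2 n1 n2, aux_mqi _ _ f1 f2 a c b d⟩

/-- With `α = 1 2 0^ω` over `{0,1,2}`:
(i) `β ≡_mqi α` iff `β` has a finite, positive number of `1`s and of `2`s;
(ii) each `β ≡_mqi α` is 1qi-equivalent to `1^i 2^j 0^ω` for exactly one pair
`(i, j)` with `i, j ≥ 1`;
(iii) `1^i 2^j 0^ω ≤_1qi 1^{i'} 2^{j'} 0^ω` iff `i ≤ i'` and `j ≤ j'`.
Hence the poset of 1qi-degrees inside `[α]_mqi` is isomorphic to `ℕ × ℕ` with the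
componentwise ordering. -/
theorem mqi_degree_iso_nat_squared :
    (∀ β : ℕ → Fin 3, MQIequiv β (ijStr 1 1) ↔
        ({x : ℕ | 1 ≤ x ∧ β x = 1}.Finite ∧ {x : ℕ | 1 ≤ x ∧ β x = 1}.Nonempty ∧
         {x : ℕ | 1 ≤ x ∧ β x = 2}.Finite ∧ {x : ℕ | 1 ≤ x ∧ β x = 2}.Nonempty)) ∧
    (∀ β : ℕ → Fin 3, MQIequiv β (ijStr 1 1) →
        ∃! p : ℕ × ℕ, 1 ≤ p.1 ∧ 1 ≤ p.2 ∧ OQIequiv β (ijStr p.1 p.2)) ∧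
    (∀ i j i' j' : ℕ, 1 ≤ i → 1 ≤ j → 1 ≤ i' → 1 ≤ j' →
        (OQIred (ijStr i j) (ijStr i' j') ↔ i ≤ i' ∧ j ≤ j')) := by
  refine ⟨part_one, ?_, ?_⟩
  · intro β hβ
    obtain ⟨a, b, c, d⟩ := (part_one β).1 hβ
    have key : ∀ i j, OQIequiv β (ijStr i j) ↔ i = (cset β 1).ncard ∧ j = (cset β 2).ncard := by
      intro i j
      obtain ⟨f1, f2, e1, e2⟩ := ij_facts i j
      rw [OQIequiv, aux_oqi_s8 _ _ a c f1 f2, aux_oqi_s8 _ _ f1 f2 a c, e1, e2]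
      omega
    refine ⟨((cset β 1).ncard, (cset β 2).ncard), ⟨?_, ?_, (key _ _).2 ⟨rfl, rfl⟩⟩, ?_⟩
    · exact (Set.ncard_pos a).2 b
    · exact (Set.ncard_pos c).2 d
    · rintro ⟨i, j⟩ ⟨-, -, h⟩
      obtain ⟨h1, h2⟩ := (key i j).1 h
      rw [h1, h2]
  · intro i j i' j' _ _ _ _
    obtain ⟨f1, f2, e1, e2⟩ := ij_facts i j
    obtain ⟨f1', f2', e1', e2'⟩ := ij_facts i' j'
    rw [aux_oqi_s8 _ _ f1 f2 f1' f2', e1, e2, e1', e2']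
end

section
/- Let α and β be infinite strings over a finite alphabet and let f be a C-pqi-reduction from α to β (a computable bijective C-quasi-isometry). Then for every position x, |x − f(x)| < 2C² + 1. -/
/-- If `f` is a `C`-pqi-reduction from `α` to `β` (a computable
bijective `C`-quasi-isometry), then for every position `x`, `|x − f x| < 2C² + 1`. -/
theorem pqi_absdiff_bound {Γ : Type*} [Fintype Γ] (C : ℕ) (α β : ℕ → Γ)
    (f : ℕ → ℕ) (hf : IsQI C α β f) (hcomp : Computable f)
    (hinj : ∀ x y, 1 ≤ x → 1 ≤ y → f x = f y → x = y)
    (hsurj : ∀ y, 1 ≤ y → ∃ x, 1 ≤ x ∧ f x = y) :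
    ∀ x : ℕ, 1 ≤ x → |((x : ℤ)) - (f x : ℤ)| < 2 * (C : ℤ) ^ 2 + 1 := by
  obtain ⟨hC, hpos, -, -, -, hb⟩ := hf
  intro x hx
  have h1 : f x ≤ x + C := by
    have hsub : Finset.Icc 1 (f x) ⊆ (Finset.Icc 1 (x + C)).image f := by
      intro y hy
      rw [Finset.mem_Icc] at hy
      obtain ⟨z, hz, rfl⟩ := hsurj y hy.1
      refine Finset.mem_image.2 ⟨z, Finset.mem_Icc.2 ⟨hz, ?_⟩, rfl⟩
      by_contra h
      have := hb x z hx (by omega)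
      omega
    have h := (Finset.card_le_card hsub).trans Finset.card_image_le
    simpa using h
  have h2 : x ≤ f x + C := by
    have h := Finset.card_le_card_of_injOn (s := Finset.Icc 1 (x - C - 1))
      (t := Finset.Icc 1 (f x - 1)) f
      (by
        intro y hy
        simp only [Finset.coe_Icc, Set.mem_Icc] at hy ⊢
        have := hb y x hy.1 (by omega)
        have := hpos y hy.1
        omega)
      (by
        intro y hy z hz hyz
        simp only [Finset.coe_Icc, Set.mem_Icc] at hy hz
        exact hinj y z hy.1 hz.1 hyz)
    have := hpos x hx
    simp only [Nat.card_Icc] at h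
    omega
  have h3 : (C : ℤ) ≤ (C : ℤ) ^ 2 := by
    have : (1 : ℤ) ≤ C := by exact_mod_cast hC
    nlinarith
  rw [abs_lt]
  constructor <;> push_cast <;> omega
end

section
/- Let α be a computable infinite string over a finite alphabet Σ. If [α]_pqi = [α]_1qi = [α]_mqi (the three classes coincide as sets of infinite strings), then α is a constant string, i.e. α = a^ω for some letter a ∈ Σ; in particular all three degree classes are trivial. -/
def qcnt {Γ : Type*} (α : ℕ → Γ) (p : Γ → Bool) (n : ℕ) : ℕ :=
  Nat.rec (motive := fun _ => ℕ) 0 (fun k c => c + (if p (α (k + 1)) = true then 1 else 0)) n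

def qe {Γ : Type*} (α : ℕ → Γ) (p : Γ → Bool) (n : ℕ) : ℕ := n + qcnt α p n

def qr {Γ : Type*} (α : ℕ → Γ) (p : Γ → Bool) (n : ℕ) : ℕ :=
  Nat.rec (motive := fun _ => ℕ) 0 (fun k r => if k + 1 ≤ qe α p r then r else r + 1) n

section
variable {Γ : Type*} (α : ℕ → Γ) (p : Γ → Bool)

theorem qcnt_succ (n : ℕ) :
    qcnt α p (n + 1) = qcnt α p n + (if p (α (n + 1)) = true then 1 else 0) := rfl

theorem qr_succ (n : ℕ) :
    qr α p (n + 1) = if n + 1 ≤ qe α p (qr α p n) then qr α p n else qr α p n + 1 := rfl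

theorem qcnt_card (n : ℕ) :
    qcnt α p n = ((Finset.Icc 1 n).filter (fun x => p (α x) = true)).card := by
  induction n with
  | zero => rfl
  | succ n ih =>
    rw [qcnt_succ, ih, ← Finset.insert_Icc_right_eq_Icc_add_one (by omega), Finset.filter_insert]
    split_ifs with h
    · rw [Finset.card_insert_of_notMem (by simp)]
    · rfl

theorem qe_succ (n : ℕ) :
    qe α p (n + 1) = qe α p n + (if p (α (n + 1)) = true then 2 else 1) := by
  unfold qe; rw [qcnt_succ]; split_ifs <;> omega

theorem qe_zero : qe α p 0 = 0 := rfl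
theorem qr_zero : qr α p 0 = 0 := rfl

theorem qe_strict : StrictMono (qe α p) :=
  strictMono_nat_of_lt_succ (fun n => by rw [qe_succ]; split_ifs <;> omega)

theorem qcnt_mono : Monotone (qcnt α p) :=
  monotone_nat_of_le_succ (fun n => by rw [qcnt_succ]; omega)

theorem qr_spec (y : ℕ) : y ≤ qe α p (qr α p y) ∧ ∀ x, x < qr α p y → qe α p x < y := by
  induction y with
  | zero => exact ⟨Nat.zero_le _, fun x hx => by simp [qr_zero] at hx⟩
  | succ n ih =>
    rw [qr_succ]
    split_ifs with h
    · exact ⟨h, fun x hx => (ih.2 x hx).trans (Nat.lt_succ_self n)⟩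
    · refine ⟨?_, fun x hx => ?_⟩
      · have := qe_strict α p (Nat.lt_succ_self (qr α p n))
        have h3 := ih.1
        simp only [Nat.succ_eq_add_one] at this
        omega
      · have := (qe_strict α p).monotone (Nat.lt_succ_iff.mp hx)
        omega

theorem qr_eq {x y : ℕ} (h1 : y ≤ qe α p x) (h2 : ∀ z, z < x → qe α p z < y) :
    qr α p y = x := by
  obtain ⟨h3, h4⟩ := qr_spec α p y
  rcases lt_trichotomy (qr α p y) x with h | h | h
  · have := h2 _ h; omega
  · exact h
  · have := h4 _ h; omega

theorem qr_qe (x : ℕ) : qr α p (qe α p x) = x :=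
  qr_eq α p le_rfl (fun _ hz => qe_strict α p hz)

theorem qr_le {y n : ℕ} (h : y ≤ qe α p n) : qr α p y ≤ n := by
  by_contra hc
  have := (qr_spec α p y).2 n (by omega)
  omega

theorem qr_pos {y : ℕ} (h : 1 ≤ y) : 1 ≤ qr α p y := by
  by_contra hc
  have h0 : qr α p y = 0 := by omega
  have := (qr_spec α p y).1
  rw [h0, qe_zero] at this
  omega

theorem qi_r : IsQI 2 (fun y => α (qr α p y)) α (qr α p) := by
  refine ⟨by norm_num, fun x => qr_pos α p, fun _ _ => rfl, ?_, ?_, ?_⟩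
  · have : qr α p 1 ≤ 1 := qr_le α p (by rw [qe_succ, qe_zero]; split_ifs <;> omega)
    omega
  · intro x _
    rw [qr_succ]
    split_ifs
    · simp
    · push_cast; simp
  · intro x y hx hxy
    by_contra hc
    have h1 := (qr_spec α p y).1
    have h2 := (qe_strict α p).monotone (Nat.not_lt.mp hc)
    have h3 := qr_pos α p hx
    obtain ⟨k, hk⟩ : ∃ k, qr α p x = k + 1 := ⟨qr α p x - 1, by omega⟩
    have h4 := (qr_spec α p x).2 k (by omega)
    have h5 := qe_succ α p k
    rw [hk] at h2
    split_ifs at h5 <;> omega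

theorem qi_e : IsQI 2 α (fun y => α (qr α p y)) (qe α p) := by
  refine ⟨by norm_num, fun x hx => ?_, fun x _ => ?_, ?_, ?_, ?_⟩
  · unfold qe; omega
  · simp only [qr_qe]
  · rw [qe_succ, qe_zero]; split_ifs <;> omega
  · intro x _
    rw [qe_succ]
    split_ifs <;> push_cast <;> simp
  · intro x y _ hxy
    exact qe_strict α p (by omega)

theorem qe_computable [Finite Γ] [Primcodable Γ] (hα : Computable α) : Computable (qe α p) := by
  have hg : Computable (fun k : ℕ => (if p (α (k + 1)) = true then 1 else 0 : ℕ)) :=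
    (Primrec.dom_finite (fun a : Γ => (if p a = true then 1 else 0 : ℕ))).to_comp.comp
      (hα.comp Computable.succ)
  have hc : Computable (qcnt α p) := by
    have h2 : Computable₂ (fun (_ : ℕ) (q : ℕ × ℕ) =>
        q.2 + (if p (α (q.1 + 1)) = true then 1 else 0 : ℕ)) :=
      (Primrec.nat_add.to_comp.comp (Computable.snd.comp Computable.snd)
        (hg.comp (Computable.fst.comp Computable.snd))).to₂
    exact Computable.nat_rec Computable.id (Computable.const 0) h2
  exact Primrec.nat_add.to_comp.comp Computable.id hc

theorem qr_computable [Finite Γ] [Primcodable Γ] (hα : Computable α) : Computable (qr α p) := by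
  have he := qe_computable α p hα
  have h2 : Computable₂ (fun (_ : ℕ) (q : ℕ × ℕ) =>
      if q.1 + 1 ≤ qe α p q.2 then q.2 else q.2 + 1) := by
    have hd : Computable₂ (fun a b : ℕ => decide (a ≤ b)) := Primrec.nat_le.decide.to_comp
    have hb : Computable (fun (z : ℕ × (ℕ × ℕ)) => decide (z.2.1 + 1 ≤ qe α p z.2.2)) :=
      hd.comp (Computable.succ.comp (Computable.fst.comp Computable.snd))
        (he.comp (Computable.snd.comp Computable.snd))
    have := Computable.cond hb (Computable.snd.comp Computable.snd)
        (Computable.succ.comp (Computable.snd.comp Computable.snd))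
    refine Computable.of_eq this (fun z => ?_)
    simp [Bool.cond_decide]
  exact Computable.nat_rec Computable.id (Computable.const 0) h2

theorem qmequiv [Finite Γ] [Primcodable Γ] (hα : Computable α) :
    MQIequiv (fun y => α (qr α p y)) α :=
  ⟨⟨2, _, qi_r α p, qr_computable α p hα⟩, ⟨2, _, qi_e α p, qe_computable α p hα⟩⟩

theorem q_inf (h : OQIred (fun y => α (qr α p y)) α) {x₀ : ℕ} (hx : 1 ≤ x₀)
    (hp : p (α x₀) = true) : {x | 1 ≤ x ∧ p (α x) = true}.Infinite := by
  intro hfin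
  obtain ⟨C, f, ⟨_, hf1, hf2, _⟩, _, hinj⟩ := h
  have e1 : ∀ x, 1 ≤ x → 1 ≤ qe α p x := fun x hx => by unfold qe; omega
  have hm : Set.MapsTo (fun x => f (qe α p x)) {x | 1 ≤ x ∧ p (α x) = true}
      {x | 1 ≤ x ∧ p (α x) = true} := by
    rintro x ⟨h1, h2⟩
    refine ⟨hf1 _ (e1 x h1), ?_⟩
    rw [hf2 _ (e1 x h1)]
    simpa only [qr_qe] using h2
  have hi : Set.InjOn (fun x => f (qe α p x)) {x | 1 ≤ x ∧ p (α x) = true} := by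
    rintro x ⟨h1, h2⟩ y ⟨h3, h4⟩ hxy
    exact (qe_strict α p).injective (hinj _ _ (e1 x h1) (e1 y h3) hxy)
  have hs : Set.SurjOn (fun x => f (qe α p x)) {x | 1 ≤ x ∧ p (α x) = true}
      {x | 1 ≤ x ∧ p (α x) = true} :=
    (Set.eq_of_subset_of_ncard_le hm.image_subset
      (Set.ncard_image_of_injOn hi).ge hfin).ge
  obtain ⟨k, rfl⟩ : ∃ k, x₀ = k + 1 := ⟨x₀ - 1, by omega⟩
  have hk := qe_succ α p k
  rw [if_pos hp] at hk
  have hr : qr α p (qe α p k + 1) = k + 1 := by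
    apply qr_eq
    · omega
    · intro z hz
      have := (qe_strict α p).monotone (Nat.lt_succ_iff.mp hz)
      omega
  obtain ⟨x, ⟨h1, h2⟩, h3⟩ := hs (show f (qe α p k + 1) ∈ {x | 1 ≤ x ∧ p (α x) = true} from
    ⟨hf1 _ (by omega), by rw [hf2 _ (by omega)]; simpa only [hr] using hp⟩)
  have h4 := hinj _ _ (e1 x h1) (by omega) h3
  have h5 : k < x := (qe_strict α p).lt_iff_lt.mp (by omega)
  have h6 : x < k + 1 := (qe_strict α p).lt_iff_lt.mp (by omega)
  omega

theorem q_unb (h : {x | 1 ≤ x ∧ p (α x) = true}.Infinite) (k : ℕ) : ∃ n, k ≤ qcnt α p n := by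
  obtain ⟨t, ht, hc⟩ := h.exists_subset_card_eq k
  refine ⟨t.sup id, ?_⟩
  rw [qcnt_card, ← hc]
  apply Finset.card_le_card
  intro x hx
  have := ht hx
  simp only [Finset.mem_filter, Finset.mem_Icc]
  exact ⟨⟨this.1, Finset.le_sup (f := id) hx⟩, this.2⟩

theorem q_disp {β γ : ℕ → Γ} {C : ℕ} {f : ℕ → ℕ} (h : IsQI C β γ f)
    (hs : ∀ y, 1 ≤ y → ∃ x, 1 ≤ x ∧ f x = y) {x : ℕ} (hx : 1 ≤ x) : f x ≤ x + C := by
  obtain ⟨_, _, _, _, _, hb⟩ := h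
  have : Finset.Icc 1 (f x) ⊆ (Finset.Icc 1 (x + C)).image f := by
    intro y hy
    rw [Finset.mem_Icc] at hy
    obtain ⟨z, hz, rfl⟩ := hs y hy.1
    refine Finset.mem_image.mpr ⟨z, Finset.mem_Icc.mpr ⟨hz, ?_⟩, rfl⟩
    by_contra hc
    have := hb x z hx (by omega)
    omega
  have h1 := (Finset.card_le_card this).trans Finset.card_image_le
  simpa using h1

theorem q_bound (h : PQIred α (fun y => α (qr α p y))) :
    ∃ C, ∀ n, qcnt α (fun a => !p a) (n + qcnt α p n) ≤ qcnt α (fun a => !p a) n + C := by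
  obtain ⟨C, f, hq, _, hinj, hs⟩ := h
  have hq' := hq
  obtain ⟨_, hf1, hf2, _⟩ := hq'
  refine ⟨C, fun n => ?_⟩
  change qcnt α _ (qe α p n) ≤ _
  set β : ℕ → Γ := fun y => α (qr α p y) with hβ
  have h1 : qcnt α (fun a => !p a) (qe α p n) ≤ qcnt β (fun a => !p a) (qe α p n + C) := by
    rw [qcnt_card, qcnt_card]
    apply Finset.card_le_card_of_injOn f
    · intro x hx
      simp only [Finset.coe_filter, Finset.mem_Icc, Set.mem_ofPred_eq] at hx ⊢
      have := q_disp hq hs hx.1.1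
      refine ⟨⟨hf1 _ hx.1.1, by omega⟩, ?_⟩
      rw [hf2 _ hx.1.1]; exact hx.2
    · intro x hx y hy hxy
      simp only [Finset.coe_filter, Finset.mem_Icc, Set.mem_ofPred_eq] at hx hy
      exact hinj _ _ hx.1.1 hy.1.1 hxy
  have h2 : ∀ m c, qcnt β (fun a => !p a) (m + c) ≤ qcnt β (fun a => !p a) m + c := by
    intro m c
    induction c with
    | zero => simp
    | succ c ih => rw [← add_assoc, qcnt_succ]; split_ifs <;> omega
  have h3 : qcnt β (fun a => !p a) (qe α p n) ≤ qcnt α (fun a => !p a) n := by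
    rw [qcnt_card, qcnt_card]
    apply Finset.card_le_card_of_injOn (qr α p)
    · intro x hx
      simp only [Finset.coe_filter, Finset.mem_Icc, Set.mem_ofPred_eq] at hx ⊢
      exact ⟨⟨qr_pos α p hx.1.1, qr_le α p hx.1.2⟩, hx.2⟩
    · have key : ∀ y, 1 ≤ y → (!p (β y)) = true → y = qe α p (qr α p y) := by
        intro y hy hp
        have hpos := qr_pos α p hy
        obtain ⟨k, hk⟩ : ∃ k, qr α p y = k + 1 := ⟨qr α p y - 1, by omega⟩
        have a1 := qr_spec α p y
        have a2 := a1.2 k (by omega)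
        have a3 := qe_succ α p k
        have a4 : ¬ p (α (k + 1)) = true := by
          simp only [hβ, hk] at hp
          simpa using hp
        rw [if_neg a4] at a3
        have a5 := a1.1
        rw [hk] at a5 ⊢
        omega
      intro x hx y hy hxy
      simp only [Finset.coe_filter, Finset.mem_Icc, Set.mem_ofPred_eq] at hx hy
      rw [key x hx.1.1 hx.2, key y hy.1.1 hy.2, hxy]
  have := h2 (qe α p n) C
  omega

theorem q_add (n : ℕ) : qcnt α p n + qcnt α (fun a => !p a) n = n := by
  induction n with
  | zero => rfl
  | succ n ih =>
    rw [qcnt_succ, qcnt_succ]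
    cases p (α (n + 1)) <;> simp <;> omega

end

theorem coinciding_degrees_trivial {Γ : Type*} [Fintype Γ] [Primcodable Γ]
    (α : ℕ → Γ) (hα : Computable α)
    (h1 : {β : ℕ → Γ | PQIequiv β α} = {β : ℕ → Γ | OQIequiv β α})
    (h2 : {β : ℕ → Γ | OQIequiv β α} = {β : ℕ → Γ | MQIequiv β α}) :
    ∃ a : Γ, ∀ x, 1 ≤ x → α x = a := by
  classical
  by_contra hne
  push Not at hne
  have hO : ∀ p : Γ → Bool, OQIequiv (fun y => α (qr α p y)) α := fun p => by
    have : (fun y => α (qr α p y)) ∈ {β : ℕ → Γ | MQIequiv β α} := qmequiv α p hα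
    rw [← h2] at this
    exact this
  have hP : ∀ p : Γ → Bool, PQIequiv (fun y => α (qr α p y)) α := fun p => by
    have : (fun y => α (qr α p y)) ∈ {β : ℕ → Γ | OQIequiv β α} := hO p
    rw [← h1] at this
    exact this
  obtain ⟨x, hx, hxa⟩ := hne (α 1)
  let p : Γ → Bool := fun a => decide (a = α 1)
  let q : Γ → Bool := fun a => !p a
  have hqp : (fun a => !q a) = p := by funext a; simp [q]
  have ip := q_inf α p (hO p).1 le_rfl (by simp [p])
  have iq := q_inf α q (hO q).1 hx (by simp [p, q, hxa])
  obtain ⟨C, hC⟩ := q_bound α p (hP p).2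
  obtain ⟨D, hD⟩ := q_bound α q (hP q).2
  rw [hqp] at hD
  change ∀ n, qcnt α q (n + qcnt α p n) ≤ qcnt α q n + C at hC
  obtain ⟨n₁, hn₁⟩ := q_unb α p ip (C + D + 1)
  obtain ⟨n₂, hn₂⟩ := q_unb α q iq (C + D + 1)
  set n := max n₁ n₂ with hn
  have a1 := hn₁.trans (qcnt_mono α p (le_max_left n₁ n₂))
  have a2 := hn₂.trans (qcnt_mono α q (le_max_right n₁ n₂))
  have b1 := (qcnt_mono α q (Nat.add_le_add_left a1 n)).trans (hC n)
  have b2 := (qcnt_mono α p (Nat.add_le_add_left a2 n)).trans (hD n)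
  have c1 : qcnt α p n + qcnt α q n = n := q_add α p n
  have c2 : qcnt α p (n + (C + D + 1)) + qcnt α q (n + (C + D + 1)) = n + (C + D + 1) :=
    q_add α p _
  omega
end

section
/- Let α be an infinite string over a finite alphabet in which at least two distinct letters occur. Then the pqi-degree [α]_pqi = {β : β ≡_pqi α} is an infinite set; that is, all non-trivial pqi-degrees are infinite. -/
theorem computable_swap_aux (p n : ℕ) : Computable (fun x => Equiv.swap p n x) := by
  have : (fun x => Equiv.swap p n x) = fun x => if x = p then n else if x = n then p else x := by
    funext x
    exact Equiv.swap_apply_def p n x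
  rw [this]
  apply Primrec.to_comp
  exact Primrec.ite (Primrec.eq.comp Primrec.id (Primrec.const p)) (Primrec.const n)
    (Primrec.ite (Primrec.eq.comp Primrec.id (Primrec.const n)) (Primrec.const p) Primrec.id)

theorem pqired_swap_aux {Γ : Type*} (α β : ℕ → Γ) (p n : ℕ) (hp : 1 ≤ p) (hn : 1 ≤ n)
    (hc : ∀ x, β (Equiv.swap p n x) = α x) : PQIred α β := by
  have hpos : ∀ x, 1 ≤ x → 1 ≤ Equiv.swap p n x := by
    intro x hx
    rw [Equiv.swap_apply_def]
    split_ifs <;> omega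
  refine ⟨p + n + 1, fun x => Equiv.swap p n x, ⟨by omega, hpos, fun x _ => hc x, ?_, ?_, ?_⟩,
    computable_swap_aux p n, fun x y _ _ h => (Equiv.swap p n).injective h,
    fun y hy => ⟨Equiv.swap p n y, hpos y hy, Equiv.swap_apply_self p n y⟩⟩
  · simp only [Equiv.swap_apply_def]
    split_ifs <;> omega
  · intro x hx
    simp only [Equiv.swap_apply_def]
    rw [abs_le]
    split_ifs <;> push_cast <;> omega
  · intro x y hx hy
    simp only [Equiv.swap_apply_def]
    split_ifs <;> omega

/-- If at least two distinct letters occur in `α`, then the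
pqi-degree of `α` is an infinite set: all non-trivial pqi-degrees are infinite. -/
theorem nontrivial_pqi_degree_infinite {Γ : Type*} [Fintype Γ] (α : ℕ → Γ)
    (h : ∃ x y, 1 ≤ x ∧ 1 ≤ y ∧ α x ≠ α y) :
    {β : ℕ → Γ | PQIequiv β α}.Infinite := by
  obtain ⟨c, hc⟩ := Finite.exists_infinite_fiber α
  have hinf : (α ⁻¹' {c} \ {0}).Infinite :=
    (Set.infinite_coe_iff.mp hc).sdiff (Set.finite_singleton 0)
  obtain ⟨p, hp, hpc⟩ : ∃ p, 1 ≤ p ∧ α p ≠ c := by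
    obtain ⟨x, y, hx, hy, hxy⟩ := h
    by_cases hxc : α x = c
    · exact ⟨y, hy, fun hyc => hxy (hxc.trans hyc.symm)⟩
    · exact ⟨x, hx, hxc⟩
  refine Set.infinite_of_injOn_mapsTo (f := fun n x => α (Equiv.swap p n x)) ?_ ?_ hinf
  · rintro n ⟨hn, -⟩ m ⟨hm, -⟩ hnm
    by_contra hne
    have hn' : α n = c := hn
    have hnp : n ≠ p := by
      rintro rfl
      exact hpc hn'
    have := congrFun hnm n
    simp only [Equiv.swap_apply_right, Equiv.swap_apply_of_ne_of_ne hnp hne] at this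
    exact hpc (this.trans hn')
  · rintro n ⟨-, hn0⟩
    have hn1 : 1 ≤ n := Nat.one_le_iff_ne_zero.mpr hn0
    exact ⟨pqired_swap_aux _ _ p n hp hn1 fun x => rfl,
      pqired_swap_aux _ _ p n hp hn1 fun x => by simp⟩
end

section
/- Let Σ = {a_1, …, a_l} be a finite alphabet with l ≥ 2. Then there exist two distinct infinite strings α and β over Σ (namely α = (a_1)^ω and β = (a_2 a_3 ⋯ a_l)^ω) such that α ≤_mqi (a_1 a_2 ⋯ a_l)^ω and β ≤_mqi (a_1 a_2 ⋯ a_l)^ω, and for every computable infinite string γ over Σ, if α ≤_mqi γ and β ≤_mqi γ then γ ≡_mqi (a_1 a_2 ⋯ a_l)^ω. That is, [(a_1 ⋯ a_l)^ω]_mqi is the unique recursive common upper bound of [α]_mqi and [β]_mqi under ≤_mqi. -/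
/-- The periodic string `(a_1 a_2 ⋯ a_l)^ω` over the alphabet `Fin l`
(identifying `a_i` with `i - 1 : Fin l`): position `n` carries letter `(n-1) % l`. -/
def cycStr (l : ℕ) (hl : 0 < l) : ℕ → Fin l :=
  fun n => ⟨(n - 1) % l, Nat.mod_lt _ hl⟩

/-- The periodic string `(a_2 a_3 ⋯ a_l)^ω` over the alphabet `Fin l`. -/
def tailCycStr (l : ℕ) (hl : 1 < l) : ℕ → Fin l :=
  fun n => ⟨1 + (n - 1) % (l - 1), by
    have := Nat.mod_lt (n - 1) (show 0 < l - 1 by omega); omega⟩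

theorem qi_bound {Γ : Type*} {C : ℕ} {α β : ℕ → Γ} {f : ℕ → ℕ} (h : IsQI C α β f) (x m : ℕ)
    (hx : 1 ≤ x) : f (x + m) ≤ f x + m * C := by
  obtain ⟨h1, h2, h3, h4, h5, h6⟩ := h
  induction m with
  | zero => simp
  | succ m ih =>
    have := h5 (x + m) (by omega)
    rw [abs_le] at this
    have e : (m + 1) * C = m * C + C := by ring
    rw [e, ← add_assoc x]
    omega

theorem qi_unbdd {Γ : Type*} {C : ℕ} {α β : ℕ → Γ} {f : ℕ → ℕ} (h : IsQI C α β f) (n : ℕ) :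
    ∃ X, ∀ x, X ≤ x → n < f x := by
  obtain ⟨h1, h2, h3, h4, h5, h6⟩ := h
  induction n with
  | zero => exact ⟨1, fun x hx => h2 x hx⟩
  | succ n ih =>
    obtain ⟨X, hX⟩ := ih
    refine ⟨X + 1 + C + 1, fun x hx => ?_⟩
    have := hX (X + 1) (by omega)
    have := h6 (X + 1) x (by omega) (by omega)
    omega

theorem qi_window {Γ : Type*} {C : ℕ} {α β : ℕ → Γ} {f : ℕ → ℕ} (h : IsQI C α β f)
    (p j : ℕ) (hj : 1 ≤ j) (hjp : j ≤ p) (a : Γ) (ha : ∀ k, α (j + k * p) = a) (n : ℕ) :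
    ∃ m, n < m ∧ m ≤ n + p * C ∧ β m = a := by
  classical
  have hex : ∃ k, n < f (j + k * p) := by
    obtain ⟨X, hX⟩ := qi_unbdd h n
    exact ⟨X, hX _ (by nlinarith)⟩
  refine ⟨f (j + Nat.find hex * p), Nat.find_spec hex, ?_, ?_⟩
  · rcases hk : Nat.find hex with _ | k
    · have := qi_bound h 1 (j - 1) le_rfl
      have h4 := h.2.2.2.1
      obtain ⟨i, rfl⟩ : ∃ i, j = i + 1 := ⟨j - 1, by omega⟩
      simp only [Nat.add_sub_cancel, add_comm 1 i] at this
      simp only [Nat.zero_mul, Nat.add_zero]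
      nlinarith
    · have := Nat.find_min hex (m := k) (by omega)
      have h' := qi_bound h (j + k * p) p (by omega)
      have e : j + (k + 1) * p = j + k * p + p := by ring
      rw [e]
      omega
  · rw [h.2.2.1 _ (by omega), ha]

theorem top_aux (l : ℕ) (hl : 0 < l) (γ : ℕ → Fin l) (hγ : Computable γ) :
    MQIred γ (cycStr l hl) := by
  refine ⟨2 * l, fun x => l * (x - 1) + (γ x).val + 1, ⟨by omega, by intros; dsimp only; omega, ?_, ?_, ?_, ?_⟩, ?_⟩
  · intro x hx
    apply Fin.ext
    simp [cycStr, Nat.mod_eq_of_lt]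
  · have := (γ 1).2
    simp; omega
  · intro x hx
    obtain ⟨i, rfl⟩ : ∃ i, x = i + 1 := ⟨x - 1, by omega⟩
    have h1 := (γ (i + 1)).2
    have h2 := (γ (i + 1 + 1)).2
    simp only [Nat.add_sub_cancel]
    rw [abs_le]
    push_cast
    constructor <;> nlinarith
  · intro x y hx hxy
    obtain ⟨i, rfl⟩ : ∃ i, x = i + 1 := ⟨x - 1, by omega⟩
    obtain ⟨k, rfl⟩ : ∃ k, y = i + 1 + 1 + k := ⟨y - (i + 2), by omega⟩
    have h1 := (γ (i + 1)).2
    have e : i + 1 + 1 + k - 1 = i + 1 + k := by omega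
    simp only [Nat.add_sub_cancel, e]
    nlinarith [Nat.zero_le (l * k)]
  · have a1 : Computable (fun x : ℕ => l * (x - 1)) :=
      (Primrec.nat_mul.comp (Primrec.const l) (Primrec.nat_sub.comp Primrec.id (Primrec.const 1))).to_comp
    have a2 : Computable (fun x : ℕ => (γ x).val) := Primrec.fin_val.to_comp.comp hγ
    have a3 : Computable (fun x : ℕ => l * (x - 1) + (γ x).val) :=
      Primrec.nat_add.to_comp.comp a1 a2
    exact Computable.succ.comp a3

theorem comp_tail (l : ℕ) (hl : 1 < l) : Computable (tailCycStr l hl) := by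
  have : Primrec (tailCycStr l hl) := by
    rw [← Primrec.fin_val_iff]
    exact Primrec.nat_add.comp (Primrec.const 1) (Primrec.nat_mod.comp
      (Primrec.nat_sub.comp Primrec.id (Primrec.const 1)) (Primrec.const (l - 1)))
  exact this.to_comp

theorem bot_aux (l : ℕ) (hl : 0 < l) (γ : ℕ → Fin l) (hγ : Computable γ) (D : ℕ) (hD : 1 ≤ D)
    (H : ∀ a n, ∃ m, n < m ∧ m ≤ n + D ∧ γ m = a) :
    MQIred (cycStr l hl) γ := by
  classical
  have hex : ∀ x, ∃ k, γ (D * (x - 1) + 1 + k) = cycStr l hl x := by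
    intro x
    obtain ⟨m, h1, h2, h3⟩ := H (cycStr l hl x) (D * (x - 1))
    exact ⟨m - (D * (x - 1) + 1), by rw [← h3]; congr 1; omega⟩
  have hlt : ∀ x, Nat.find (hex x) < D := by
    intro x
    obtain ⟨m, h1, h2, h3⟩ := H (cycStr l hl x) (D * (x - 1))
    have := Nat.find_min' (hex x) (m := m - (D * (x - 1) + 1)) (by rw [← h3]; congr 1; omega)
    omega
  refine ⟨2 * D, fun x => D * (x - 1) + 1 + Nat.find (hex x),
    ⟨by omega, by intros; dsimp only; omega, ?_, ?_, ?_, ?_⟩, ?_⟩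
  · intro x hx
    exact Nat.find_spec (hex x)
  · have := hlt 1
    simp only [Nat.sub_self, Nat.mul_zero]
    omega
  · intro x hx
    obtain ⟨i, rfl⟩ : ∃ i, x = i + 1 := ⟨x - 1, by omega⟩
    have h1 := hlt (i + 1)
    have h2 := hlt (i + 1 + 1)
    dsimp only
    generalize Nat.find (hex (i + 1)) = u at *
    generalize Nat.find (hex (i + 1 + 1)) = v at *
    simp only [Nat.add_sub_cancel]
    rw [abs_le]
    push_cast
    constructor <;> nlinarith
  · intro x y hx hxy
    obtain ⟨i, rfl⟩ : ∃ i, x = i + 1 := ⟨x - 1, by omega⟩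
    obtain ⟨k, rfl⟩ : ∃ k, y = i + 1 + 1 + k := ⟨y - (i + 2), by omega⟩
    have h1 := hlt (i + 1)
    have e : i + 1 + 1 + k - 1 = i + 1 + k := by omega
    simp only [Nat.add_sub_cancel, e]
    nlinarith [Nat.zero_le (D * k)]
  · have a1 : Primrec (fun x : ℕ => D * (x - 1) + 1) :=
      Primrec.succ.comp (Primrec.nat_mul.comp (Primrec.const D)
        (Primrec.nat_sub.comp Primrec.id (Primrec.const 1)))
    have a2 : Computable (fun q : ℕ × ℕ => (γ (D * (q.1 - 1) + 1 + q.2)).val) :=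
      Primrec.fin_val.to_comp.comp (hγ.comp
        (Primrec.nat_add.comp (a1.comp Primrec.fst) Primrec.snd).to_comp)
    have a3 : Computable (fun q : ℕ × ℕ => (q.1 - 1) % l) :=
      (Primrec.nat_mod.comp (Primrec.nat_sub.comp Primrec.fst (Primrec.const 1))
        (Primrec.const l)).to_comp
    have a4 : Computable₂ (fun x k : ℕ =>
        decide ((γ (D * (x - 1) + 1 + k)).val = (x - 1) % l)) :=
      (Primrec.eq (α := ℕ)).decide.to_comp.comp a2 a3
    have a5 := Partrec.rfind (p := fun x k => Part.some (decide ((γ (D * (x - 1) + 1 + k)).val = (x - 1) % l))) a4.partrec₂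
    have a6 : Computable (fun x => Nat.find (hex x)) := by
      refine Partrec.of_eq a5 fun x => ?_
      apply Part.eq_some_iff.2
      refine Nat.mem_rfind.2 ?_
      constructor
      · have := Nat.find_spec (hex x)
        have := congrArg Fin.val this
        exact Part.mem_some_iff.2 (decide_eq_true this).symm
      · intro m hm
        have := Nat.find_min (hex x) hm
        rw [Fin.ext_iff] at this
        simpa [cycStr] using this
    exact Primrec.nat_add.to_comp.comp a1.to_comp a6

theorem mqi_join_is_top (l : ℕ) (hl : 2 ≤ l) :
    (fun _ : ℕ => (⟨0, by omega⟩ : Fin l)) ≠ tailCycStr l (by omega) ∧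
    MQIred (fun _ : ℕ => (⟨0, by omega⟩ : Fin l)) (cycStr l (by omega)) ∧
    MQIred (tailCycStr l (by omega)) (cycStr l (by omega)) ∧
    (∀ γ : ℕ → Fin l, Computable γ →
      MQIred (fun _ : ℕ => (⟨0, by omega⟩ : Fin l)) γ →
      MQIred (tailCycStr l (by omega)) γ →
      MQIequiv γ (cycStr l (by omega))) := by
  refine ⟨?_, top_aux l _ _ (Computable.const _), top_aux l _ _ (comp_tail l _), ?_⟩
  · intro h
    have := congrArg Fin.val (congrFun h 1)
    simp [tailCycStr] at this
  · intro γ hγ ⟨C1, f, hf, _⟩ ⟨C2, g, hg, _⟩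
    refine ⟨top_aux l _ γ hγ, bot_aux l _ γ hγ (C1 + (l - 1) * C2) ?_ ?_⟩
    · have := hf.1
      omega
    · intro a n
      by_cases ha : a.val = 0
      · obtain ⟨m, h1, h2, h3⟩ := qi_window hf 1 1 le_rfl le_rfl a
          (fun k => Fin.ext (by simp [ha])) n
        exact ⟨m, h1, by omega, h3⟩
      · have hal := a.2
        obtain ⟨m, h1, h2, h3⟩ := qi_window hg (l - 1) a.val (by omega) (by omega) a
          (fun k => Fin.ext (by
            have e : a.val + k * (l - 1) - 1 = (a.val - 1) + k * (l - 1) := by omega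
            simp only [tailCycStr, e, Nat.add_mul_mod_self_right]
            rw [Nat.mod_eq_of_lt (by omega)]
            omega)) n
        exact ⟨m, h1, by omega, h3⟩
end

section
/- There exist two pairs (α, β) and (γ, δ) of computable infinite strings over {0,1} such that α ≤_mqi γ, α ≤_mqi δ, β ≤_mqi γ and β ≤_mqi δ, but there is no infinite string ξ with α ≤_mqi ξ, β ≤_mqi ξ, ξ ≤_mqi γ and ξ ≤_mqi δ. (Witnesses: α = σ_1σ_2⋯ with σ_i = (01)^{2^{2^i}} 0^i 1^i, β = τ_1τ_2⋯ with τ_i = (01)^{2^{2^i}} 1^i 0^i, γ = μ_1μ_2⋯ with μ_i = (01)^{2^{2^i}} 0^i, and δ = ν_1ν_2⋯ with ν_i = (01)^{2^{2^i}} 1^i.) Hence the partial order of mqi-degrees is not dense with respect to pairs of mqi-degrees. -/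
/-- Positions of the blocks. -/
def qS : ℕ → ℕ := fun n => Nat.rec 2 (fun _ r => r * r) n

/-- The stage of a position. -/
def qT : ℕ → ℕ := fun n => Nat.rec 0 (fun x r => if qS (r + 1) ≤ x + 1 then r + 1 else r) n

/-- Numeric values of the lower strings. -/
def qA (c x : ℕ) : ℕ :=
  if qS (qT x) ≤ x ∧ x < qS (qT x) + 2 * qT x then c
  else if qS (qT x) + 2 * qT x ≤ x ∧ x < qS (qT x) + 4 * qT x then 1 - c
  else x % 2

/-- Numeric values of the upper strings. -/
def qG (c x : ℕ) : ℕ :=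
  if qS (qT x) + 2 * qT x ≤ x ∧ x < qS (qT x) + 4 * qT x then c
  else x % 2

/-- The string with given numeric values. -/
def qStr (a : ℕ → ℕ) (x : ℕ) : Fin 2 := ⟨a x % 2, Nat.mod_lt _ (by norm_num)⟩

theorem qS_succ (i : ℕ) : qS (i + 1) = qS i * qS i := rfl

theorem qT_succ (x : ℕ) :
    qT (x + 1) = if qS (qT x + 1) ≤ x + 1 then qT x + 1 else qT x := rfl

theorem qS_even (i : ℕ) : ∃ k, qS i = 2 * k := by
  induction i with
  | zero => exact ⟨1, rfl⟩
  | succ i ih => obtain ⟨k, hk⟩ := ih; exact ⟨k * qS i, by rw [qS_succ]; nlinarith⟩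

theorem qS_ge (i : ℕ) : 2 * i + 2 ≤ qS i := by
  induction i with
  | zero => exact le_refl 2
  | succ i ih => rw [qS_succ]; nlinarith

theorem qS_gap (i : ℕ) : qS i + 4 * i + 2 ≤ qS (i + 1) := by
  have := qS_ge i
  rw [qS_succ]; nlinarith

theorem qS_mono : StrictMono qS :=
  strictMono_nat_of_lt_succ fun i => by have := qS_gap i; omega

theorem qT_spec (x : ℕ) : x < qS (qT x + 1) ∧ (2 ≤ x → qS (qT x) ≤ x) := by
  induction x with
  | zero => exact ⟨by decide, by omega⟩
  | succ x ih =>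
    obtain ⟨h1, h2⟩ := ih
    rw [qT_succ]
    split_ifs with h
    · have := qS_gap (qT x + 1)
      exact ⟨by omega, fun _ => h⟩
    · refine ⟨by omega, fun hx => ?_⟩
      by_cases h' : 2 ≤ x
      · have := h2 h'; omega
      · have : x = 1 := by omega
        subst this
        decide

theorem qT_eq {x i : ℕ} (h1 : qS i ≤ x) (h2 : x < qS (i + 1)) : qT x = i := by
  obtain ⟨h3, h4⟩ := qT_spec x
  have h5 := qS_ge i
  have h6 := h4 (by omega)
  have h7 := qS_mono.lt_iff_lt.1 (lt_of_le_of_lt h1 h3)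
  have h8 := qS_mono.lt_iff_lt.1 (lt_of_le_of_lt h6 h2)
  omega

theorem qT_small {x : ℕ} (h : x < 2) : qT x = 0 := by
  interval_cases x <;> decide

theorem qS_primrec : Primrec qS :=
  Primrec.nat_rec₁ 2 (Primrec.nat_mul.comp Primrec.snd Primrec.snd).to₂

theorem qT_primrec : Primrec qT :=
  Primrec.nat_rec₁ 0 (Primrec.ite (Primrec.nat_le.comp
    (qS_primrec.comp (Primrec.succ.comp Primrec.snd)) (Primrec.succ.comp Primrec.fst))
    (Primrec.succ.comp Primrec.snd) Primrec.snd).to₂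

theorem qAff_primrec (k : ℕ) : Primrec fun x => qS (qT x) + k * qT x :=
  Primrec.nat_add.comp (qS_primrec.comp qT_primrec)
    (Primrec.nat_mul.comp (Primrec.const k) qT_primrec)

theorem qPar_primrec : Primrec fun x : ℕ => x % 2 :=
  Primrec.nat_mod.comp Primrec.id (Primrec.const 2)

theorem qA_primrec (c : ℕ) : Primrec (qA c) :=
  Primrec.ite ((Primrec.nat_le.comp (qS_primrec.comp qT_primrec) Primrec.id).and
      (Primrec.nat_lt.comp Primrec.id (qAff_primrec 2))) (Primrec.const c)
    (Primrec.ite ((Primrec.nat_le.comp (qAff_primrec 2) Primrec.id).and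
      (Primrec.nat_lt.comp Primrec.id (qAff_primrec 4))) (Primrec.const (1 - c)) qPar_primrec)

theorem qG_primrec (c : ℕ) : Primrec (qG c) :=
  Primrec.ite ((Primrec.nat_le.comp (qAff_primrec 2) Primrec.id).and
      (Primrec.nat_lt.comp Primrec.id (qAff_primrec 4))) (Primrec.const c) qPar_primrec

theorem qStr_computable {a : ℕ → ℕ} (h : Primrec a) : Computable (qStr a) :=
  (Primrec.fin_val_iff.1 (qPar_primrec.comp h : Primrec fun x => (qStr a x).1)).to_comp

/-- Unshifted reduction. -/
def qF (c x : ℕ) : ℕ :=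
  if qS (qT x) + 2 * qT x ≤ x ∧ x < qS (qT x) + 4 * qT x then x
  else 2 * (x / 2) + qA c x

/-- Shifted reduction. -/
def qF' (c x : ℕ) : ℕ :=
  if qS (qT x) ≤ x ∧ x < qS (qT x) + 2 * qT x then x + 2 * qT x
  else 2 * ((x + 2 * qT x) / 2) + qA c x

theorem qF_primrec (c : ℕ) : Primrec (qF c) :=
  Primrec.ite ((Primrec.nat_le.comp (qAff_primrec 2) Primrec.id).and
      (Primrec.nat_lt.comp Primrec.id (qAff_primrec 4))) Primrec.id
    (Primrec.nat_add.comp (Primrec.nat_mul.comp (Primrec.const 2)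
      (Primrec.nat_div.comp Primrec.id (Primrec.const 2))) (qA_primrec c))

theorem qSh_primrec : Primrec fun x => x + 2 * qT x :=
  Primrec.nat_add.comp Primrec.id (Primrec.nat_mul.comp (Primrec.const 2) qT_primrec)

theorem qF'_primrec (c : ℕ) : Primrec (qF' c) :=
  Primrec.ite ((Primrec.nat_le.comp (qS_primrec.comp qT_primrec) Primrec.id).and
      (Primrec.nat_lt.comp Primrec.id (qAff_primrec 2))) qSh_primrec
    (Primrec.nat_add.comp (Primrec.nat_mul.comp (Primrec.const 2)
      (Primrec.nat_div.comp qSh_primrec (Primrec.const 2))) (qA_primrec c))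

theorem qA_le {c : ℕ} (hc : c ≤ 1) (x : ℕ) : qA c x ≤ 1 := by
  unfold qA; split_ifs <;> omega

theorem qA_one (c : ℕ) : qA c 1 = 1 := by
  have : qT 1 = 0 := by decide
  have h0 : qS 0 = 2 := rfl
  simp [qA, this, h0]

theorem qT_step (x : ℕ) : qT x ≤ qT (x + 1) ∧ qT (x + 1) ≤ qT x + 1 := by
  rw [qT_succ]; split_ifs <;> omega

theorem qT_mono : Monotone qT := monotone_nat_of_le_succ fun x => (qT_step x).1

theorem qG_of {c i t : ℕ} (h0 : t < 2 ∨ qS i ≤ t) (h1 : t < qS (i + 1))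
    (h2 : t < qS i + 2 * i ∨ qS i + 4 * i ≤ t) : qG c t = t % 2 := by
  unfold qG
  rcases h0 with h0 | h0
  · have := qT_small h0
    rw [if_neg]; rw [this]; omega
  · have := qT_eq h0 h1
    rw [if_neg]; rw [this]; omega

theorem qi_unshift {c : ℕ} (hc : c ≤ 1) :
    IsQI 10 (qStr (qA c)) (qStr (qG (1 - c))) (qF c) := by
  have near : ∀ x, qF c x ≤ x + 1 ∧ x ≤ qF c x + 1 := by
    intro x
    have := qA_le hc x
    unfold qF; split_ifs <;> omega
  refine ⟨by norm_num, ?_, ?_, ?_, ?_, ?_⟩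
  · intro x hx
    by_cases h : x = 1
    · subst h
      have : qT 1 = 0 := by decide
      simp [qF, qA_one, this]
    · have := near x; omega
  · intro x hx
    have key : qG (1 - c) (qF c x) = qA c x := by
      have hA := qA_le hc x
      obtain ⟨k, hk⟩ := qS_even (qT x)
      obtain ⟨k', hk'⟩ := qS_even (qT x + 1)
      obtain ⟨h3, h4⟩ := qT_spec x
      unfold qF
      split_ifs with h
      · unfold qG qA
        rw [if_pos h, if_neg (by omega)]
      · rw [qG_of (i := qT x)]
        · omega
        · omega
        · omega
        · omega
    simp only [qStr, key]
  · have := near 1; omega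
  · intro x _
    have h1 := near x
    have h2 := near (x + 1)
    rw [abs_le]; omega
  · intro x y _ h
    have h1 := near x
    have h2 := near y
    omega

theorem qi_shift {c : ℕ} (hc : c ≤ 1) :
    IsQI 10 (qStr (qA c)) (qStr (qG c)) (qF' c) := by
  have near : ∀ x, qF' c x ≤ x + 2 * qT x + 1 ∧ x + 2 * qT x ≤ qF' c x + 1 := by
    intro x
    have := qA_le hc x
    unfold qF'; split_ifs <;> omega
  refine ⟨by norm_num, ?_, ?_, ?_, ?_, ?_⟩
  · intro x hx
    by_cases h : x = 1
    · subst h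
      have : qT 1 = 0 := by decide
      simp [qF', qA_one, this]
    · have := near x; omega
  · intro x hx
    have key : qG c (qF' c x) = qA c x := by
      have hA := qA_le hc x
      obtain ⟨k, hk⟩ := qS_even (qT x)
      obtain ⟨k', hk'⟩ := qS_even (qT x + 1)
      obtain ⟨h3, h4⟩ := qT_spec x
      have g1 := qS_gap (qT x)
      have g2 := qS_gap (qT x + 1)
      have s0 := @qT_small x
      unfold qF'
      split_ifs with h
      · have hT : qT (x + 2 * qT x) = qT x := qT_eq (by omega) (by omega)
        unfold qG qA
        rw [hT, if_pos (by omega), if_pos h]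
      · by_cases hb : 2 * ((x + 2 * qT x) / 2) + qA c x < qS (qT x + 1)
        · rw [qG_of (i := qT x)] <;> omega
        · rw [qG_of (i := qT x + 1)] <;> omega
    simp only [qStr, key]
  · have := near 1
    have : qT 1 = 0 := by decide
    omega
  · intro x _
    have h1 := near x
    have h2 := near (x + 1)
    have h3 := qT_step x
    rw [abs_le]; omega
  · intro x y _ h
    have h1 := near x
    have h2 := near y
    have h3 := qT_mono (show x ≤ y by omega)
    omega

/-- The string is constant around a position. -/
def qWin (σ : ℕ → Fin 2) (c : Fin 2) (m L : ℕ) : Prop :=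
  ∀ t, 1 ≤ t → m ≤ t + L → t ≤ m + L → σ t = c

theorem qi_mono {C D : ℕ} (h : C ≤ D) {σ τ : ℕ → Fin 2} {f : ℕ → ℕ} (hf : IsQI C σ τ f) :
    IsQI D σ τ f := by
  obtain ⟨h1, h2, h3, h4, h5, h6⟩ := hf
  exact ⟨by omega, h2, h3, by omega, fun x hx => (h5 x hx).trans (by exact_mod_cast h),
    fun x y hx hy => h6 x y hx (by omega)⟩

theorem qi_lip {C : ℕ} {σ τ : ℕ → Fin 2} {f : ℕ → ℕ} (hf : IsQI C σ τ f) (x k : ℕ)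
    (hx : 1 ≤ x) : f (x + k) ≤ f x + C * k ∧ f x ≤ f (x + k) + C * k := by
  obtain ⟨h1, h2, h3, h4, h5, h6⟩ := hf
  induction k with
  | zero => simp
  | succ k ih =>
    have := h5 (x + k) (by omega)
    rw [abs_le] at this
    rw [← add_assoc, Nat.mul_succ]
    omega

theorem qi_cross {C : ℕ} {σ τ : ℕ → Fin 2} {f : ℕ → ℕ} (hf : IsQI C σ τ f) {m : ℕ}
    (hm : 1 ≤ m) {c : Fin 2} {k : ℕ} (hw : qWin τ c m (C * k + C)) :
    ∃ x, 1 ≤ x ∧ m ≤ f x ∧ f x ≤ m + C ∧ x ≤ (C + 2) * m ∧ m ≤ (C + 2) * x ∧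
      qWin σ c x k := by
  classical
  have lip := qi_lip hf
  obtain ⟨h1, h2, h3, h4, h5, h6⟩ := hf
  have grow : ∀ k, k + 1 ≤ f (1 + (C + 1) * k) := by
    intro k
    induction k with
    | zero => simpa using h2 1 le_rfl
    | succ k ih =>
      have := h6 (1 + (C + 1) * k) (1 + (C + 1) * (k + 1)) (by omega) (by
        rw [Nat.mul_succ]; omega)
      omega
  have ex : ∃ x, 1 ≤ x ∧ m ≤ f x := ⟨1 + (C + 1) * m, by omega, by have := grow m; omega⟩
  obtain ⟨x, ⟨hx1, hx2⟩, hmin⟩ : ∃ x, (1 ≤ x ∧ m ≤ f x) ∧ ∀ y < x, ¬ (1 ≤ y ∧ m ≤ f y) :=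
    ⟨Nat.find ex, Nat.find_spec ex, fun y hy => Nat.find_min ex hy⟩
  have hup : f x ≤ m + C := by
    by_cases h : x = 1
    · subst h; omega
    · have a := hmin (x - 1) (by omega)
      have b := lip (x - 1) 1 (by omega)
      rw [show x - 1 + 1 = x by omega] at b
      omega
  refine ⟨x, hx1, hx2, hup, ?_, ?_, ?_⟩
  · by_contra hcon
    refine hmin (1 + (C + 1) * m) ?_ ⟨by omega, by have := grow m; omega⟩
    nlinarith
  · have := (lip 1 (x - 1) le_rfl).1
    rw [show 1 + (x - 1) = x by omega] at this
    have e : C * x = C * (x - 1) + C := by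
      obtain ⟨z, rfl⟩ : ∃ z, x = z + 1 := ⟨x - 1, by omega⟩
      simp [Nat.mul_succ]
    nlinarith
  · intro t ht a b
    rw [← h3 t ht]
    rcases le_total x t with h | h
    · obtain ⟨d, rfl⟩ := Nat.exists_eq_add_of_le h
      have l := lip x d hx1
      have : C * d ≤ C * k := Nat.mul_le_mul_left _ (by omega)
      exact hw _ (h2 _ ht) (by omega) (by omega)
    · obtain ⟨d, rfl⟩ := Nat.exists_eq_add_of_le h
      have l := lip t d ht
      have : C * d ≤ C * k := Nat.mul_le_mul_left _ (by omega)
      exact hw _ (h2 _ ht) (by omega) (by omega)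

theorem qG_win {c : ℕ} (hc : c ≤ 1) {j R : ℕ} (h : R < j) :
    qWin (qStr (qG c)) ⟨c, by omega⟩ (qS j + 3 * j) R := by
  intro t ht a b
  have g := qS_gap j
  have hT : qT t = j := qT_eq (by omega) (by omega)
  apply Fin.ext
  simp only [qStr, qG, hT]
  rw [if_pos (by omega)]; omega

theorem qA_win {c : ℕ} (hc : c ≤ 1) {e : Fin 2} {y R : ℕ} (hy : 3 ≤ y) (hR : 1 ≤ R)
    (hw : qWin (qStr (qA c)) e y R) :
    qS (qT y) ≤ y ∧ y < qS (qT y) + 4 * qT y ∧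
    (e.1 = c → y < qS (qT y) + 2 * qT y) ∧ (e.1 = 1 - c → qS (qT y) + 2 * qT y ≤ y) := by
  obtain ⟨h3, h4⟩ := qT_spec y
  have h4 := h4 (by omega)
  have g := qS_gap (qT y)
  have w0 := congrArg Fin.val (hw y (by omega) (by omega) (by omega))
  simp only [qStr] at w0
  have hlt : y < qS (qT y) + 4 * qT y := by
    by_contra hcon
    have p0 : qA c y = y % 2 := by
      unfold qA; rw [if_neg (by omega), if_neg (by omega)]
    by_cases hb : y + 1 < qS (qT y + 1)
    · have w1 := congrArg Fin.val (hw (y + 1) (by omega) (by omega) (by omega))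
      simp only [qStr] at w1
      have hT : qT (y + 1) = qT y := qT_eq (by omega) (by omega)
      have p1 : qA c (y + 1) = (y + 1) % 2 := by
        unfold qA; rw [hT, if_neg (by omega), if_neg (by omega)]
      omega
    · have w1 := congrArg Fin.val (hw (y - 1) (by omega) (by omega) (by omega))
      simp only [qStr] at w1
      have hT : qT (y - 1) = qT y := qT_eq (by omega) (by omega)
      have p1 : qA c (y - 1) = (y - 1) % 2 := by
        unfold qA; rw [hT, if_neg (by omega), if_neg (by omega)]
      omega
  refine ⟨h4, hlt, fun he => ?_, fun he => ?_⟩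
  · by_contra hcon
    have : qA c y = 1 - c := by
      unfold qA; rw [if_neg (by omega), if_pos (by omega)]
    omega
  · by_contra hcon
    have : qA c y = c := by
      unfold qA; rw [if_pos (by omega)]
    omega

theorem q_stage {K i j y : ℕ} (hj : 5 * K < j) (h1 : qS i ≤ y) (h2 : y < qS i + 4 * i)
    (h3 : y ≤ K * (qS j + 3 * j)) (h4 : qS j + 3 * j ≤ K * y) : i = j := by
  have gi := qS_ge i
  have gj := qS_ge j
  rcases lt_trichotomy i j with h | h | h
  · exfalso
    obtain ⟨l, rfl⟩ : ∃ l, j = l + 1 := ⟨j - 1, by omega⟩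
    have m := qS_mono.monotone (show i ≤ l by omega)
    have gl := qS_ge l
    have e := qS_succ l
    have : K * y ≤ K * (5 * qS l) := Nat.mul_le_mul_left _ (by omega)
    have : qS l * qS l ≤ 5 * K * qS l := by nlinarith
    have := Nat.le_of_mul_le_mul_right this (by omega)
    omega
  · exact h
  · exfalso
    have m := qS_mono.monotone (show j + 1 ≤ i by omega)
    have e := qS_succ j
    have : K * (qS j + 3 * j) ≤ K * (5 * qS j) := Nat.mul_le_mul_left _ (by omega)
    have : qS j * qS j ≤ 5 * K * qS j := by nlinarith
    have := Nat.le_of_mul_le_mul_right this (by omega)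
    omega

/-- Points in the lower string over a point of the middle string. -/
theorem q_over {C c j x : ℕ} (hc : c ≤ 1) {e : Fin 2} {ξ : ℕ → Fin 2} {f : ℕ → ℕ}
    (hf : IsQI C (qStr (qA c)) ξ f) (hj : 5 * ((C + 2) * (C + 2)) < j) (hx : 1 ≤ x)
    (h1 : x ≤ (C + 2) * (qS j + 3 * j)) (h2 : qS j + 3 * j ≤ (C + 2) * x)
    (hw : qWin ξ e x (C * (C + 1) + C)) :
    ∃ y, 1 ≤ y ∧ x ≤ f y ∧ f y ≤ x + C ∧ qWin (qStr (qA c)) e y (C + 1) ∧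
      (e.1 = c → y < qS j + 2 * j) ∧ (e.1 = 1 - c → qS j + 2 * j ≤ y) := by
  obtain ⟨y, hy, a, b, u, v, w⟩ := qi_cross hf hx hw
  have h3 : y ≤ (C + 2) * (C + 2) * (qS j + 3 * j) := by
    rw [mul_assoc]; exact u.trans (Nat.mul_le_mul_left _ h1)
  have h4 : qS j + 3 * j ≤ (C + 2) * (C + 2) * y := by
    rw [mul_assoc]; exact h2.trans (Nat.mul_le_mul_left _ v)
  have hy3 : 3 ≤ y := by
    by_contra hcon
    have : (C + 2) * (C + 2) * y ≤ (C + 2) * (C + 2) * 2 := Nat.mul_le_mul_left _ (by omega)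
    omega
  obtain ⟨p, q, r, s⟩ := qA_win hc hy3 (by omega) w
  have := q_stage hj p q h3 h4
  rw [this] at r s
  exact ⟨y, hy, a, b, w, r, s⟩

theorem q_none (ξ : ℕ → Fin 2) (C : ℕ) (f f' g h : ℕ → ℕ)
    (hf : IsQI C (qStr (qA 0)) ξ f) (hf' : IsQI C (qStr (qA 1)) ξ f')
    (hg : IsQI C ξ (qStr (qG 0)) g) (hh : IsQI C ξ (qStr (qG 1)) h) : False := by
  obtain ⟨j, hj1, hj2⟩ : ∃ j, 5 * ((C + 2) * (C + 2)) < j ∧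
      C * (C * (C + 1) + C) + C < j :=
    ⟨5 * ((C + 2) * (C + 2)) + (C * (C * (C + 1) + C) + C) + 1, by omega, by omega⟩
  have hm : 1 ≤ qS j + 3 * j := by omega
  obtain ⟨x, hx, -, -, u, v, w⟩ := qi_cross hg hm (qG_win (c := 0) (by omega) hj2)
  obtain ⟨x', hx', -, -, u', v', w'⟩ := qi_cross hh hm (qG_win (c := 1) (by omega) hj2)
  obtain ⟨y, hy, a1, a2, a3, a4, -⟩ := q_over zero_le_one hf hj1 hx u v w
  obtain ⟨y', hy', b1, b2, b3, -, b4⟩ := q_over zero_le_one hf hj1 hx' u' v' w'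
  obtain ⟨z, hz, c1, c2, c3, -, c4⟩ := q_over le_rfl hf' hj1 hx u v w
  obtain ⟨z', hz', d1, d2, d3, d4, -⟩ := q_over le_rfl hf' hj1 hx' u' v' w'
  have a4 := a4 rfl
  have b4 := b4 rfl
  have c4 := c4 rfl
  have d4 := d4 rfl
  have sep : y + C < y' := by
    by_contra hcon
    have p := a3 y' hy' (by omega) (by omega)
    have q := b3 y' hy' (by omega) (by omega)
    rw [p] at q
    exact absurd (congrArg Fin.val q) (by simp)
  have sep' : z' + C < z := by
    by_contra hcon
    have p := d3 z hz (by omega) (by omega)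
    have q := c3 z hz (by omega) (by omega)
    rw [p] at q
    exact absurd (congrArg Fin.val q) (by simp)
  have l := hf.2.2.2.2.2 y y' hy sep
  have l' := hf'.2.2.2.2.2 z' z hz' sep'
  have p := w x' hx' (by omega) (by omega)
  have q := w' x' hx' (by omega) (by omega)
  rw [p] at q
  exact absurd (congrArg Fin.val q) (by simp)

/-- There are two pairs `(α, β)` and `(γ, δ)` of computable
strings over `{0,1}` with `α, β` both mqi-reducible to `γ` and to `δ`, but with no
string `ξ` satisfying `α ≤_mqi ξ`, `β ≤_mqi ξ`, `ξ ≤_mqi γ` and `ξ ≤_mqi δ`.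
Hence the partial order of mqi-degrees is not dense with respect to pairs. -/
theorem mqi_not_dense :
    ∃ α β γ δ : ℕ → Fin 2,
      Computable α ∧ Computable β ∧ Computable γ ∧ Computable δ ∧
      MQIred α γ ∧ MQIred α δ ∧ MQIred β γ ∧ MQIred β δ ∧
      ¬ ∃ ξ : ℕ → Fin 2, MQIred α ξ ∧ MQIred β ξ ∧ MQIred ξ γ ∧ MQIred ξ δ := by
  refine ⟨qStr (qA 0), qStr (qA 1), qStr (qG 0), qStr (qG 1),
    qStr_computable (qA_primrec 0), qStr_computable (qA_primrec 1),
    qStr_computable (qG_primrec 0), qStr_computable (qG_primrec 1),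
    ⟨10, qF' 0, qi_shift zero_le_one, (qF'_primrec 0).to_comp⟩,
    ⟨10, qF 0, qi_unshift zero_le_one, (qF_primrec 0).to_comp⟩,
    ⟨10, qF 1, qi_unshift le_rfl, (qF_primrec 1).to_comp⟩,
    ⟨10, qF' 1, qi_shift le_rfl, (qF'_primrec 1).to_comp⟩, ?_⟩
  rintro ⟨ξ, ⟨C1, f, hf, -⟩, ⟨C2, f', hf', -⟩, ⟨C3, g, hg, -⟩, ⟨C4, h, hh, -⟩⟩
  exact q_none ξ (C1 + C2 + C3 + C4) f f' g h (qi_mono (by omega) hf) (qi_mono (by omega) hf')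
    (qi_mono (by omega) hg) (qi_mono (by omega) hh)
end

section
/- There exist two computable infinite strings α and β over {0,1} such that α ≤_qi β (some quasi-isometric reduction from α to β exists) but α is not mqi-reducible to β (no computable quasi-isometric reduction from α to β exists). -/
namespace QM
open Nat.Partrec (Code)

def qs : ℕ → ℕ
  | 0 => 16
  | T + 1 => qs T * qs T * (qs T * qs T)

def VC (j : ℕ) : Prop := ∃ T < j, j = qs T * qs T ∨ j = qs T * qs T + 1 ∨ j = qs T * qs T + 2

def dig (T k e : ℕ) : ℕ := k * 5 ^ (e + 1) / T % 5

def GG (T k : ℕ) : Prop :=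
  ∀ e < T, 5 ^ (e + 2) ≤ T →
    (dig T k e = 1 ∨ dig T k e = 3) ∧
      ¬ (Code.evaln T (Denumerable.ofNat Code e) e = some (dig T k e / 2))

def MB (j : ℕ) : Prop := ∃ T < j, ∃ k < T + 1, j = qs T + 1 + 2 * k ∧ GG T k

def MA (r : ℕ) : Prop := ∃ T < r, r = qs T + 1

open Classical in
noncomputable def strA (x : ℕ) : Fin 2 :=
  if Nat.sqrt x % 2 = 0 ∨ (x = Nat.sqrt x * Nat.sqrt x + Nat.sqrt x ∧ MA (Nat.sqrt x)) then 1 else 0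

open Classical in
noncomputable def strB (x : ℕ) : Fin 2 :=
  if (VC (Nat.sqrt x) ∧ x % 2 = 0) ∨ (¬ VC (Nat.sqrt x) ∧
    (Nat.sqrt x % 2 = 0 ∨ (x = Nat.sqrt x * Nat.sqrt x + Nat.sqrt x ∧ MB (Nat.sqrt x)))) then 1 else 0

section comp
open Primrec

lemma ex_lt {β : Type*} [Primcodable β] {R : ℕ → β → Prop} (hf : PrimrecRel R) :
    PrimrecRel fun n y ↦ ∃ x < n, R x y :=
  (hf.exists_mem_list.comp (list_range.comp fst) snd).of_eq (by simp)

lemma all_lt {β : Type*} [Primcodable β] {R : ℕ → β → Prop} (hf : PrimrecRel R) :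
    PrimrecRel fun n y ↦ ∀ x < n, R x y :=
  (hf.forall_mem_list.comp (list_range.comp fst) snd).of_eq (by simp)

lemma qs_prim : Primrec qs := by
  have h : Primrec (fun n : ℕ => Nat.rec (motive := fun _ => ℕ) 16
      (fun _ y => y * y * (y * y)) n) := by
    refine Primrec.nat_rec₁ 16 ?_
    have hy : Primrec₂ (fun (_ y : ℕ) => y * y) := by
      exact Primrec.nat_mul.comp Primrec.snd Primrec.snd
    exact Primrec.nat_mul.comp hy hy
  refine h.of_eq fun n => ?_
  induction n with
  | zero => rfl
  | succ n ih => simp only [qs]; rw [← ih]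

lemma pow5_prim : Primrec (fun n : ℕ => 5 ^ n) := by
  have h : Primrec (fun n : ℕ => Nat.rec (motive := fun _ => ℕ) 1
      (fun _ y => y * 5) n) := by
    refine Primrec.nat_rec₁ 1 ?_
    exact Primrec.nat_mul.comp Primrec.snd (Primrec.const 5)
  refine h.of_eq fun n => ?_
  induction n with
  | zero => rfl
  | succ n ih => rw [pow_succ, ← ih]

lemma VC_prim : PrimrecPred VC := by
  have h : PrimrecRel (fun T j : ℕ => j = qs T * qs T ∨ j = qs T * qs T + 1 ∨ j = qs T * qs T + 2) := by
    have hq : Primrec (fun p : ℕ × ℕ => qs p.1 * qs p.1) :=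
      Primrec.nat_mul.comp (qs_prim.comp Primrec.fst) (qs_prim.comp Primrec.fst)
    refine PrimrecPred.or (Primrec.eq.comp Primrec.snd hq) (PrimrecPred.or
      (Primrec.eq.comp Primrec.snd (Primrec.nat_add.comp hq (Primrec.const 1)))
      (Primrec.eq.comp Primrec.snd (Primrec.nat_add.comp hq (Primrec.const 2))))
  have h2 := (ex_lt h)
  exact PrimrecRel.comp h2 Primrec.id Primrec.id

lemma dig_prim : Primrec (fun p : ℕ × (ℕ × ℕ) => dig p.2.1 p.2.2 p.1) := by
  unfold dig
  refine Primrec.nat_mod.comp (Primrec.nat_div.comp (Primrec.nat_mul.comp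
    (Primrec.snd.comp Primrec.snd) (pow5_prim.comp (Primrec.nat_add.comp Primrec.fst (Primrec.const 1))))
    (Primrec.fst.comp Primrec.snd)) (Primrec.const 5)

lemma GG_prim : PrimrecPred (fun p : ℕ × ℕ => GG p.1 p.2) := by
  have h : PrimrecRel (fun (e : ℕ) (p : ℕ × ℕ) => 5 ^ (e + 2) ≤ p.1 →
    (dig p.1 p.2 e = 1 ∨ dig p.1 p.2 e = 3) ∧
      ¬ (Code.evaln p.1 (Denumerable.ofNat Code e) e = some (dig p.1 p.2 e / 2))) := by
    have h1 : PrimrecPred (fun q : ℕ × (ℕ × ℕ) => 5 ^ (q.1 + 2) ≤ q.2.1) :=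
      Primrec.nat_le.comp (pow5_prim.comp (Primrec.nat_add.comp Primrec.fst (Primrec.const 2)))
        (Primrec.fst.comp Primrec.snd)
    have h2 : PrimrecPred (fun q : ℕ × (ℕ × ℕ) => dig q.2.1 q.2.2 q.1 = 1) :=
      Primrec.eq.comp dig_prim (Primrec.const 1)
    have h3 : PrimrecPred (fun q : ℕ × (ℕ × ℕ) => dig q.2.1 q.2.2 q.1 = 3) :=
      Primrec.eq.comp dig_prim (Primrec.const 3)
    have h4 : PrimrecPred (fun q : ℕ × (ℕ × ℕ) =>
        Code.evaln q.2.1 (Denumerable.ofNat Code q.1) q.1 = some (dig q.2.1 q.2.2 q.1 / 2)) := by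
      refine Primrec.eq.comp (Code.primrec_evaln.comp (Primrec.pair (Primrec.pair
        (Primrec.fst.comp Primrec.snd) ((Primrec.ofNat Code).comp Primrec.fst)) Primrec.fst)) ?_
      exact Primrec.option_some.comp (Primrec.nat_div.comp dig_prim (Primrec.const 2))
    refine (PrimrecPred.or h1.not (PrimrecPred.and (PrimrecPred.or h2 h3) h4.not)).of_eq ?_
    intro q
    tauto
  have h2 := (all_lt h)
  have h3 := PrimrecRel.comp h2 (f := fun p : ℕ × ℕ => p.1) (g := fun p : ℕ × ℕ => p) Primrec.fst Primrec.id
  exact h3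

lemma MB_prim : PrimrecPred MB := by
  have h : PrimrecRel (fun (k : ℕ) (p : ℕ × ℕ) => p.2 = qs p.1 + 1 + 2 * k ∧ GG p.1 k) := by
    refine PrimrecPred.and (Primrec.eq.comp (Primrec.snd.comp Primrec.snd) ?_)
      (GG_prim.comp (Primrec.pair (Primrec.fst.comp Primrec.snd) Primrec.fst))
    exact Primrec.nat_add.comp (Primrec.nat_add.comp (qs_prim.comp (Primrec.fst.comp Primrec.snd))
      (Primrec.const 1)) (Primrec.nat_mul.comp (Primrec.const 2) Primrec.fst)
  have h2 : PrimrecRel (fun (T j : ℕ) => ∃ k < T + 1, j = qs T + 1 + 2 * k ∧ GG T k) := 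
    PrimrecRel.comp (ex_lt h) (Primrec.succ.comp Primrec.fst) Primrec.id
  exact PrimrecRel.comp (ex_lt h2) Primrec.id Primrec.id

lemma MA_prim : PrimrecPred MA := by
  have h : PrimrecRel (fun T j : ℕ => j = qs T + 1) :=
    Primrec.eq.comp Primrec.snd (Primrec.succ.comp (qs_prim.comp Primrec.fst))
  exact PrimrecRel.comp (ex_lt h) Primrec.id Primrec.id

lemma ctr_prim : PrimrecPred (fun x : ℕ => x = Nat.sqrt x * Nat.sqrt x + Nat.sqrt x) :=
  Primrec.eq.comp Primrec.id (Primrec.nat_add.comp (Primrec.nat_mul.comp Primrec.nat_sqrt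
    Primrec.nat_sqrt) Primrec.nat_sqrt)

lemma even_prim : PrimrecPred (fun x : ℕ => x % 2 = 0) :=
  Primrec.eq.comp (Primrec.nat_mod.comp Primrec.id (Primrec.const 2)) (Primrec.const 0)

lemma strA_comp : Computable strA := by
  classical
  refine Primrec.to_comp ?_
  unfold strA
  refine Primrec.ite ?_ (Primrec.const 1) (Primrec.const 0)
  exact PrimrecPred.or (even_prim.comp Primrec.nat_sqrt)
    (PrimrecPred.and ctr_prim (MA_prim.comp Primrec.nat_sqrt))

lemma strB_comp : Computable strB := by
  classical
  refine Primrec.to_comp ?_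
  unfold strB
  refine Primrec.ite ?_ (Primrec.const 1) (Primrec.const 0)
  have hv := VC_prim.comp Primrec.nat_sqrt
  exact PrimrecPred.or (PrimrecPred.and hv even_prim) (PrimrecPred.and hv.not
    (PrimrecPred.or (even_prim.comp Primrec.nat_sqrt)
    (PrimrecPred.and ctr_prim (MB_prim.comp Primrec.nat_sqrt))))

end comp

section path
open Classical in
noncomputable def XX (e : ℕ) : ℕ := if 0 ∈ Code.eval (Denumerable.ofNat Code e) e then 1 else 0

noncomputable def mm : ℕ → ℕ
  | 0 => 2 * XX 0 + 1
  | e + 1 => 5 * mm e + (2 * XX (e + 1) + 1)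

lemma XX_cases (e : ℕ) : XX e = 0 ∨ XX e = 1 := by
  unfold XX; split_ifs <;> simp

lemma mm_mod (e : ℕ) : mm e % 5 = 2 * XX e + 1 := by
  cases e with
  | zero => simp only [mm]; have := XX_cases 0; omega
  | succ e => simp only [mm]; have := XX_cases (e + 1); omega

lemma exists_y : ∃ y : ℝ, 0 ≤ y ∧ y ≤ 1 ∧ ∀ e, (mm e : ℝ) + 1 / 5 ≤ 5 ^ (e + 1) * y ∧
    5 ^ (e + 1) * y ≤ (mm e : ℝ) + 4 / 5 := by
  have hle : ∀ e, ((mm e : ℝ) + 1 / 5) / 5 ^ (e + 1) ≤ ((mm e : ℝ) + 4 / 5) / 5 ^ (e + 1) := by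
    intro e
    gcongr
    norm_num
  have hanti : Antitone (fun e => Set.Icc (((mm e : ℝ) + 1 / 5) / 5 ^ (e + 1))
      (((mm e : ℝ) + 4 / 5) / 5 ^ (e + 1))) := by
    refine antitone_nat_of_succ_le ?_
    intro e
    have hX : (0 : ℝ) ≤ XX (e + 1) ∧ (XX (e + 1) : ℝ) ≤ 1 := by
      rcases XX_cases (e + 1) with h | h <;> rw [h] <;> norm_num
    have hp : (0 : ℝ) < 5 ^ (e + 1) := by positivity
    apply Set.Icc_subset_Icc
    · rw [div_le_div_iff₀ hp (by positivity), pow_succ (5 : ℝ) (e + 1)]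
      simp only [mm]; push_cast
      nlinarith
    · rw [div_le_div_iff₀ (by positivity) hp, pow_succ (5 : ℝ) (e + 1)]
      simp only [mm]; push_cast
      nlinarith
  have h := ciSup_mem_iInter_Icc_of_antitone_Icc hanti hle
  set y := ⨆ e, ((mm e : ℝ) + 1 / 5) / 5 ^ (e + 1)
  have h2 : ∀ e, (mm e : ℝ) + 1 / 5 ≤ 5 ^ (e + 1) * y ∧
    5 ^ (e + 1) * y ≤ (mm e : ℝ) + 4 / 5 := by
    intro e
    have h3 := Set.mem_iInter.1 h e
    have hp : (0 : ℝ) < 5 ^ (e + 1) := by positivity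
    obtain ⟨h4, h5⟩ := h3
    rw [div_le_iff₀ hp] at h4
    rw [le_div_iff₀ hp] at h5
    constructor <;> linarith
  refine ⟨y, ?_, ?_, h2⟩
  · have := (h2 0).1
    have : (0 : ℝ) ≤ mm 0 := Nat.cast_nonneg _
    norm_num at *
    linarith
  · have h6 := (h2 0).2
    have : (mm 0 : ℝ) ≤ 3 := by
      have : mm 0 ≤ 3 := by simp only [mm]; have := XX_cases 0; omega
      exact_mod_cast this
    norm_num at h6
    linarith

lemma exists_K : ∃ K : ℕ → ℕ, K 0 = 0 ∧ (∀ T, K (T + 1) = K T ∨ K (T + 1) = K T + 1) ∧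
    ∀ T, GG T (K T) := by
  obtain ⟨y, hy0, hy1, hy⟩ := exists_y
  refine ⟨fun T => ⌊(T : ℝ) * y⌋₊, by simp, ?_, ?_⟩
  · intro T
    have h1 : ⌊(T : ℝ) * y⌋₊ ≤ ⌊((T + 1 : ℕ) : ℝ) * y⌋₊ := by
      apply Nat.floor_mono; push_cast; nlinarith
    have h2 : ⌊((T + 1 : ℕ) : ℝ) * y⌋₊ ≤ ⌊(T : ℝ) * y⌋₊ + 1 := by
      rw [← Nat.floor_add_one (by positivity)]
      apply Nat.floor_mono; push_cast; nlinarith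
    beta_reduce
    omega
  · intro T e he hT
    have hT0 : 0 < T := by omega
    set k := ⌊(T : ℝ) * y⌋₊ with hk
    have hk1 : (k : ℝ) ≤ T * y := Nat.floor_le (by positivity)
    have hk2 : (T : ℝ) * y < k + 1 := Nat.lt_floor_add_one _
    have hp : (0 : ℝ) < 5 ^ (e + 1) := by positivity
    have hTr : (5 : ℝ) ^ (e + 1) * 5 ≤ T := by
      rw [← pow_succ]; exact_mod_cast hT
    have hT0r : (0 : ℝ) < T := by exact_mod_cast hT0
    obtain ⟨ha, hb⟩ := hy e
    have hq : k * 5 ^ (e + 1) / T = mm e := by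
      have hA : (mm e : ℝ) * T ≤ k * 5 ^ (e + 1) := by nlinarith
      have hB : (k : ℝ) * 5 ^ (e + 1) < (mm e + 1) * T := by nlinarith
      have hA' : mm e * T ≤ k * 5 ^ (e + 1) := by exact_mod_cast hA
      have hB' : k * 5 ^ (e + 1) < (mm e + 1) * T := by exact_mod_cast hB
      exact Nat.div_eq_of_lt_le hA' hB'
    have hd : dig T k e = 2 * XX e + 1 := by
      unfold dig; rw [hq, mm_mod]
    change (dig T k e = 1 ∨ dig T k e = 3) ∧
      ¬ (Code.evaln T (Denumerable.ofNat Code e) e = some (dig T k e / 2))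
    constructor
    · have := XX_cases e; omega
    · intro hev
      have h2 : dig T k e / 2 = XX e := by rw [hd]; omega
      rw [h2] at hev
      have h3 : XX e ∈ Code.eval (Denumerable.ofNat Code e) e := Code.evaln_sound hev
      by_cases h0 : 0 ∈ Code.eval (Denumerable.ofNat Code e) e
      · have h4 : XX e = 1 := by unfold XX; rw [if_pos h0]
        have := Part.mem_unique h0 h3
        omega
      · have h4 : XX e = 0 := by unfold XX; rw [if_neg h0]
        rw [h4] at h3; exact h0 h3

end path

section basics

lemma qs_ge (T : ℕ) : 16 * (T + 1) ≤ qs T := by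
  induction T with
  | zero => simp [qs]
  | succ T ih =>
    simp only [qs]
    nlinarith [Nat.mul_le_mul ih ih, Nat.le_mul_self (qs T * qs T)]

lemma qs_even (T : ℕ) : qs T % 2 = 0 := by
  induction T with
  | zero => simp [qs]
  | succ T ih => simp [qs, Nat.mul_mod, ih]

lemma qs_succ_ge (T : ℕ) : 256 * (qs T * qs T) ≤ qs (T + 1) := by
  simp only [qs]
  have := qs_ge T
  have h : 256 ≤ qs T * qs T := by nlinarith
  exact Nat.mul_le_mul_right _ h

lemma qs_le_v (T : ℕ) : 16 * qs T ≤ qs T * qs T := by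
  have := qs_ge T
  exact Nat.mul_le_mul_right _ (by omega)

lemma qs_lt {T T' : ℕ} (h : T < T') : 256 * (qs T * qs T) ≤ qs T' := by
  induction T', h using Nat.le_induction with
  | base => exact qs_succ_ge T
  | succ n hn ih =>
    have := qs_succ_ge n
    have := qs_le_v n
    omega

lemma v_mono {T T' : ℕ} (h : T ≤ T') : qs T * qs T ≤ qs T' * qs T' := by
  rcases Nat.eq_or_lt_of_le h with h | h
  · rw [h]
  · have := qs_lt h
    have := qs_le_v T'
    omega

lemma VC_of (T i : ℕ) (hi : i ≤ 2) : VC (qs T * qs T + i) := by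
  have := qs_ge T
  have := qs_le_v T
  refine ⟨T, by omega, by omega⟩

lemma sqrt_cell {j o : ℕ} (h : o ≤ 2 * j) : Nat.sqrt (j * j + o) = j :=
  Nat.sqrt_add_eq j (by omega)

lemma strA_cell {j o : ℕ} (h : o ≤ 2 * j) : strA (j * j + o) = 1 ↔
    (j % 2 = 0 ∨ (o = j ∧ MA j)) := by
  unfold strA
  rw [sqrt_cell h]
  split_ifs with h1
  · simp only [true_iff]; rcases h1 with h1 | ⟨h1, h2⟩
    · exact Or.inl h1
    · exact Or.inr ⟨by omega, h2⟩
  · simp only [Fin.isValue, zero_ne_one, false_iff]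
    rintro (h2 | ⟨h2, h3⟩)
    · exact h1 (Or.inl h2)
    · exact h1 (Or.inr ⟨by omega, h3⟩)

lemma strB_V {j o : ℕ} (h : o ≤ 2 * j) (hv : VC j) : strB (j * j + o) = 1 ↔
    (j * j + o) % 2 = 0 := by
  unfold strB
  rw [sqrt_cell h]
  simp [hv]

lemma strB_cell {j o : ℕ} (h : o ≤ 2 * j) (hv : ¬ VC j) : strB (j * j + o) = 1 ↔
    (j % 2 = 0 ∨ (o = j ∧ MB j)) := by
  unfold strB
  rw [sqrt_cell h]
  rcases Nat.mod_two_eq_zero_or_one j with h2 | h2 <;> simp [hv, h2]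

lemma fin2_eq {a b : Fin 2} (h : a = 1 ↔ b = 1) : a = b := by omega

lemma cell_repr (x : ℕ) : ∃ r o, o ≤ 2 * r ∧ x = r * r + o := by
  refine ⟨Nat.sqrt x, x - Nat.sqrt x * Nat.sqrt x, ?_, ?_⟩
  · have := Nat.sqrt_le_add x; omega
  · have := Nat.sqrt_le x; omega

end basics

section truered

lemma qi_of_h {α β : ℕ → Fin 2} (h : ℕ → ℕ) (h1 : h 1 ≤ 8) (hs : ∀ x, 1 ≤ x → h x < h (x + 1))
    (hs' : ∀ x, 1 ≤ x → h (x + 1) ≤ h x + 8) (hp : ∀ x, 1 ≤ x → 1 ≤ h x)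
    (hc : ∀ x, 1 ≤ x → β (h x) = α x ∨ β (h x + 1) = α x) : QIred α β := by
  classical
  have hmono : ∀ x d, 1 ≤ x → h x + d ≤ h (x + d) := by
    intro x d hx
    induction d with
    | zero => simp
    | succ d ih =>
      have := hs (x + d) (by omega)
      rw [show x + (d + 1) = x + d + 1 by omega]
      omega
  refine ⟨9, fun x => if β (h x) = α x then h x else h x + 1, by norm_num, ?_, ?_, ?_, ?_, ?_⟩
  · intro x hx
    have := hp x hx
    beta_reduce
    split_ifs <;> omega
  · intro x hx
    beta_reduce
    split_ifs with h2
    · exact h2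
    · exact (hc x hx).resolve_left h2
  · beta_reduce
    split_ifs <;> omega
  · intro x hx
    have := hs x hx
    have := hs' x hx
    beta_reduce
    rw [abs_le]
    split_ifs <;> push_cast <;> constructor <;> omega
  · intro x y hx hy
    have := hmono x (y - x) hx
    rw [show x + (y - x) = y by omega] at this
    beta_reduce
    split_ifs <;> omega

noncomputable def hh (G : ℕ → ℕ) (x : ℕ) : ℕ :=
  let r := Nat.sqrt x
  let o := x - r * r
  if G (r + 1) = G r + 1 then
    (if o ≤ r then G r * G r + (o + min (7 * o) (G r - r))
      else G r * G r + (G r + (o - r) + min (7 * (o - r)) (G r - r)))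
  else G r * G r + (o + min (7 * o) (6 * G r + 8 - 2 * r))

lemma hh_cell (G : ℕ → ℕ) {r o : ℕ} (h : o ≤ 2 * r) : hh G (r * r + o) =
  if G (r + 1) = G r + 1 then
    (if o ≤ r then G r * G r + (o + min (7 * o) (G r - r))
      else G r * G r + (G r + (o - r) + min (7 * (o - r)) (G r - r)))
  else G r * G r + (o + min (7 * o) (6 * G r + 8 - 2 * r)) := by
  unfold hh
  simp only [sqrt_cell h, Nat.add_sub_cancel_left]

lemma qi_of_G (G : ℕ → ℕ)
    (F1 : ∀ r, G (r + 1) = G r + 1 ∨ (G (r + 1) = G r + 3 ∧ ∃ T, G r = qs T * qs T))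
    (F2 : ∀ r, r ≤ G r) (F3 : ∀ r, G r ≤ 2 * r) (F4 : ∀ r, G r % 2 = r % 2)
    (F5 : ∀ r, MA r → MB (G r)) : QIred strA strB := by
  have hstep : ∀ x, hh G x < hh G (x + 1) ∧ hh G (x + 1) ≤ hh G x + 8 := by
    intro x
    obtain ⟨r, o, ho, rfl⟩ := cell_repr x
    have f2 := F2 r
    have f3 := F3 r
    by_cases h2 : o < 2 * r
    · rw [add_assoc, hh_cell G ho, hh_cell G (show o + 1 ≤ 2 * r by omega)]
      generalize G r * G r = S
      rcases F1 r with h | ⟨h, T, hT⟩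
      · simp only [h, if_true]
        split_ifs <;> omega
      · rw [if_neg (by omega), if_neg (by omega)]
        have : 16 ≤ G r := by rw [hT]; have := qs_ge T; have := qs_le_v T; omega
        omega
    · have ho2 : o = 2 * r := by omega
      have e1 : r * r + o + 1 = (r + 1) * (r + 1) + 0 := by rw [ho2]; ring
      rw [e1, hh_cell G ho, hh_cell G (show 0 ≤ 2 * (r + 1) by omega)]
      simp only [mul_zero, Nat.zero_min, add_zero, Nat.zero_le, if_true, ite_self]
      rcases F1 r with h | ⟨h, T, hT⟩
      · rw [if_pos h, h]
        have e2 : (G r + 1) * (G r + 1) = G r * G r + (2 * G r + 1) := by ring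
        rw [e2]
        generalize G r * G r = S
        split_ifs <;> omega
      · rw [if_neg (by omega), h]
        have : 16 ≤ G r := by rw [hT]; have := qs_ge T; have := qs_le_v T; omega
        have e2 : (G r + 3) * (G r + 3) = G r * G r + (6 * G r + 9) := by ring
        rw [e2]
        generalize G r * G r = S
        omega
  have hmono : ∀ x, x ≤ hh G x := by
    intro x
    induction x with
    | zero => simp
    | succ x ih => have := (hstep x).1; omega
  -- positions inside the texture
  have hV : ∀ T y x, qs T * qs T * (qs T * qs T) ≤ y →
      y < (qs T * qs T + 3) * (qs T * qs T + 3) →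
      (y + 1 = (qs T * qs T + 3) * (qs T * qs T + 3) → strA x = 1) →
      strB y = strA x ∨ strB (y + 1) = strA x := by
    intro T y x hy1 hy2 hy3
    have key : ∀ z, qs T * qs T * (qs T * qs T) ≤ z →
      z < (qs T * qs T + 3) * (qs T * qs T + 3) → (strB z = 1 ↔ z % 2 = 0) := by
      intro z hz1 hz2
      set v := qs T * qs T with hv
      obtain ⟨j, o, ho, rfl⟩ := cell_repr z
      have hj1 : v ≤ j := by nlinarith
      have hj2 : j < v + 3 := by nlinarith
      have hVC : VC j := by
        have := VC_of T (j - v) (by omega)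
        rw [← hv, show v + (j - v) = j by omega] at this
        exact this
      exact strB_V ho hVC
    by_cases hlast : y + 1 = (qs T * qs T + 3) * (qs T * qs T + 3)
    · left
      apply fin2_eq
      rw [key y hy1 hy2]
      simp only [hy3 hlast, iff_true]
      have hve : qs T * qs T % 2 = 0 := by simp [Nat.mul_mod, qs_even]
      have : (qs T * qs T + 3) * (qs T * qs T + 3) % 2 = 1 := by
        rw [Nat.mul_mod, Nat.add_mod, hve]
      omega
    · have k1 := key y hy1 hy2
      have k2 := key (y + 1) (by omega) (by omega)
      omega
  refine qi_of_h (hh G) ?_ (fun x _ => (hstep x).1) (fun x _ => (hstep x).2)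
    (fun x hx => le_trans hx (hmono x)) ?_
  · have := hh_cell G (show 0 ≤ 2 * 1 by norm_num)
    have f2 := F2 1
    have f3 := F3 1
    have f4 := F4 1
    have : G 1 = 1 := by omega
    simp [this] at *
    omega
  · intro x _
    obtain ⟨r, o, ho, rfl⟩ := cell_repr x
    have f2 := F2 r
    have f3 := F3 r
    have f4 := F4 r
    rw [hh_cell G ho]
    rcases F1 r with h | ⟨h, T, hT⟩
    · rw [if_pos h]
      -- offset
      obtain ⟨p, hp1, hp2, hp3, hp4, hp5⟩ : ∃ p, (if o ≤ r then G r * G r + (o + min (7 * o) (G r - r))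
        else G r * G r + (G r + (o - r) + min (7 * (o - r)) (G r - r))) = G r * G r + p ∧
        p ≤ 2 * G r ∧ (o < r → p < G r) ∧ (o = r → p = G r) ∧ (r < o → G r < p) := by
        split_ifs with h1
        · exact ⟨_, rfl, by omega, by omega, by omega, by omega⟩
        · exact ⟨_, rfl, by omega, by omega, by omega, by omega⟩
      rw [hp1]
      by_cases hv : VC (G r)
      · obtain ⟨T, _, hT⟩ := hv
        apply hV T
        · have : qs T * qs T ≤ G r := by omega
          nlinarith
        · have : G r + 1 ≤ qs T * qs T + 3 := by omega
          nlinarith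
        · intro hl
          rw [strA_cell ho]
          left
          have hve : qs T * qs T % 2 = 0 := by simp [Nat.mul_mod, qs_even]
          have : G r = qs T * qs T + 2 := by
            by_contra hne
            have : G r ≤ qs T * qs T + 1 := by omega
            nlinarith
          omega
      · by_cases hr : r % 2 = 0
        · left
          apply fin2_eq
          rw [strA_cell ho, strB_cell hp2 hv]
          constructor
          · intro _; exact Or.inl hr
          · intro _; left; omega
        · by_cases hor : o = r
          · have hpG := hp4 hor
            by_cases hA : MA r
            · left
              apply fin2_eq
              rw [strA_cell ho, strB_cell hp2 hv]
              have := F5 r hA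
              tauto
            · right
              apply fin2_eq
              rw [add_assoc, strA_cell ho, strB_cell (by omega) hv]
              constructor
              · rintro (h3 | ⟨h3, _⟩) <;> omega
              · rintro (h3 | ⟨_, h3⟩)
                · omega
                · exact absurd h3 hA
          · left
            apply fin2_eq
            rw [strA_cell ho, strB_cell hp2 hv]
            constructor
            · rintro (h3 | ⟨h3, _⟩) <;> omega
            · rintro (h3 | ⟨h3, _⟩) <;> omega
    · rw [if_neg (by omega)]
      have hve : qs T * qs T % 2 = 0 := by simp [Nat.mul_mod, qs_even]
      apply hV T
      · rw [hT]; omega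
      · rw [hT]
        have e2 : (qs T * qs T + 3) * (qs T * qs T + 3) = qs T * qs T * (qs T * qs T) + (6 * (qs T * qs T) + 9) := by ring
        rw [e2]
        rw [hT] at f2
        omega
      · intro _
        rw [strA_cell ho]
        left; omega

end truered

section trueG

def tau (K : ℕ → ℕ) : ℕ → ℕ
  | 0 => 0
  | r + 1 => if r + 2 * K (tau K r) = qs (tau K r) * qs (tau K r) then tau K r + 1 else tau K r

lemma true_red : QIred strA strB := by
  obtain ⟨K, hK0, hK1, hKG⟩ := exists_K
  have hKT : ∀ T, K T ≤ T := by
    intro T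
    induction T with
    | zero => omega
    | succ T ih => have := hK1 T; omega
  have inv : ∀ r, (∀ T, tau K r = T + 1 → qs T * qs T < r + 2 * K (tau K r)) ∧
      r + 2 * K (tau K r) ≤ qs (tau K r) * qs (tau K r) := by
    intro r
    induction r with
    | zero => simp [tau, hK0]
    | succ r ih =>
      obtain ⟨ih1, ih2⟩ := ih
      simp only [tau]
      split_ifs with h
      · have h1 := hK1 (tau K r)
        constructor
        · intro T hT
          have : T = tau K r := by omega
          subst this
          omega
        · have h2 := qs_lt (Nat.lt_succ_self (tau K r))
          have h3 := qs_le_v (tau K r + 1)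
          have h4 := qs_ge (tau K r)
          have h5 := qs_le_v (tau K r)
          simp only [Nat.succ_eq_add_one] at h2
          omega
      · constructor
        · intro T hT
          have := ih1 T hT
          omega
        · omega
  have hlag : ∀ r, 2 * K (tau K r) ≤ r := by
    intro r
    have h1 := hKT (tau K r)
    obtain h0 | ⟨T, hT⟩ : tau K r = 0 ∨ ∃ T, tau K r = T + 1 := by
      cases tau K r with
      | zero => left; rfl
      | succ T => right; exact ⟨T, rfl⟩
    · omega
    · have h2 := (inv r).1 T hT
      have h4 := qs_ge T
      have h5 := qs_le_v T
      omega
  have htest : ∀ T, tau K (qs T + 1) = T := by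
    intro T
    have h1 := hKT (tau K (qs T + 1))
    obtain ⟨i1, i2⟩ := inv (qs T + 1)
    rcases lt_trichotomy (tau K (qs T + 1)) T with h | h | h
    · have := qs_lt h
      omega
    · exact h
    · obtain ⟨T', hT'⟩ : ∃ T', tau K (qs T + 1) = T' + 1 := ⟨tau K (qs T + 1) - 1, by omega⟩
      have h2 := i1 T' hT'
      have h4 := qs_ge T'
      have h5 := qs_le_v T'
      have h6 : qs T ≤ qs T' := by
        rcases Nat.eq_or_lt_of_le (show T ≤ T' by omega) with h | h
        · rw [h]
        · have := qs_lt h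
          have := qs_le_v T
          omega
      omega
  refine qi_of_G (fun r => r + 2 * K (tau K r)) ?_ ?_ ?_ ?_ ?_
  · intro r
    beta_reduce
    simp only [tau]
    split_ifs with h
    · have h1 := hK1 (tau K r)
      rcases h1 with h1 | h1
      · left; omega
      · right; exact ⟨by omega, _, h⟩
    · left; omega
  · intro r; beta_reduce; omega
  · intro r; beta_reduce; have := hlag r; omega
  · intro r; beta_reduce; omega
  · rintro r ⟨T, hT, rfl⟩
    beta_reduce
    rw [htest]
    exact ⟨T, by omega, K T, by have := hKT T; omega, rfl, hKG T⟩

end trueG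

section adversary

lemma cell_sqrt (p : ℕ) : ∃ o, o ≤ 2 * Nat.sqrt p ∧ p = Nat.sqrt p * Nat.sqrt p + o := by
  refine ⟨p - Nat.sqrt p * Nat.sqrt p, ?_, ?_⟩
  · have := Nat.sqrt_le_add p; omega
  · have := Nat.sqrt_le p; omega

lemma lemZ {C j p q : ℕ} (hj : 4 * C + 4 ≤ j) (h0 : ¬ VC (j - 1)) (h2 : ¬ VC (j + 1))
    (hp : Nat.sqrt p = j) (hq1 : q ≤ p + 2 * C) (hq2 : p ≤ q + 2 * C)
    (hc : strB q = 1 ↔ j % 2 = 0) : Nat.sqrt q = j := by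
  obtain ⟨o, ho, hpo⟩ := cell_sqrt p
  rw [hp] at ho hpo
  obtain ⟨o', ho', hqo⟩ := cell_sqrt q
  generalize Nat.sqrt q = j' at *
  have hA : j' < j + 2 := by
    by_contra hne
    have : j + 2 ≤ j' := by omega
    nlinarith
  have hB : j < j' + 2 := by
    by_contra hne
    have : j' + 2 ≤ j := by omega
    nlinarith
  obtain h | h | h : j' = j ∨ j' = j + 1 ∨ j = j' + 1 := by omega
  · exact h
  · exfalso
    subst h
    rw [hqo, strB_cell ho' h2] at hc
    by_cases hj2 : j % 2 = 0
    · have h3 := hc.2 hj2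
      have h4 : o' = j + 1 := by
        rcases h3 with h3 | h3
        · omega
        · exact h3.1
      have : (j + 1) * (j + 1) = j * j + 2 * j + 1 := by ring
      omega
    · exact hj2 (hc.1 (Or.inl (by omega)))
  · exfalso
    subst h
    rw [hqo, strB_cell ho' h0] at hc
    by_cases hj2 : (j' + 1) % 2 = 0
    · have h3 := hc.2 hj2
      have h4 : o' = j' := by
        rcases h3 with h3 | h3
        · omega
        · exact h3.1
      have : (j' + 1) * (j' + 1) = j' * j' + 2 * j' + 1 := by ring
      omega
    · exact hj2 (hc.1 (Or.inl (by omega)))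

lemma lemMark {j p : ℕ} (h1 : ¬ VC j) (hp : Nat.sqrt p = j)
    (hc : strB p = 1 ↔ j % 2 = 1) : p = j * j + j ∧ j % 2 = 1 := by
  obtain ⟨o, ho, hpo⟩ := cell_sqrt p
  rw [hp] at ho hpo
  rw [hpo, strB_cell ho h1] at hc
  by_cases hj : j % 2 = 1
  · have h3 := hc.2 hj
    rcases h3 with h3 | h3
    · omega
    · omega
  · exfalso; exact hj (hc.1 (Or.inl (by omega)))

structure Adv (C : ℕ) (f : ℕ → ℕ) : Prop where
  col : ∀ x, 1 ≤ x → strB (f x) = strA x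
  one : f 1 ≤ C
  pos : 1 ≤ f 1
  up : ∀ x, 1 ≤ x → f (x + 1) ≤ f x + C
  dn : ∀ x, 1 ≤ x → f x ≤ f (x + 1) + C
  ord : ∀ x y, 1 ≤ x → x + C < y → f x < f y

variable {C : ℕ} {f : ℕ → ℕ}

lemma Adv.upd (H : Adv C f) (x d : ℕ) (hx : 1 ≤ x) : f (x + d) ≤ f x + C * d := by
  induction d with
  | zero => simp
  | succ d ih =>
    have := H.up (x + d) (by omega)
    rw [show x + (d + 1) = x + d + 1 by omega, Nat.mul_succ]
    omega

lemma Adv.low (H : Adv C f) (x d j : ℕ) (hx : 1 ≤ x) (hj : 1 ≤ j) (h : (C + 1) * j ≤ d) :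
    f x + j ≤ f (x + d) := by
  induction j, hj using Nat.le_induction generalizing d with
  | base => have := H.ord x (x + d) hx (by omega); omega
  | succ j hj ih =>
    rw [Nat.mul_succ] at h
    have h1 := ih (d - (C + 1)) (by omega)
    have h2 := H.ord (x + (d - (C + 1))) (x + d) (by omega) (by omega)
    omega

lemma Adv.pure (H : Adv C f) {r o : ℕ} (hr : 1 ≤ r) (ho : o ≤ 2 * r) (hor : o ≠ r) :
    strB (f (r * r + o)) = 1 ↔ r % 2 = 0 := by
  rw [H.col _ (by nlinarith), strA_cell ho]
  tauto

lemma Adv.start (H : Adv C f) {r j : ℕ} (hr : 4 * C + 4 ≤ r) (hj : 4 * C + 4 ≤ j)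
    (h0 : ¬ VC (j - 1)) (h1 : ¬ VC j) (h2 : ¬ VC (j + 1)) (hF : Nat.sqrt (f (r * r)) = j) :
    r % 2 = j % 2 ∧ ∀ o, o ≤ 2 * r → o ≠ r → Nat.sqrt (f (r * r + o)) = j := by
  have hrr : 1 ≤ r * r := by nlinarith
  have hpar : r % 2 = j % 2 := by
    by_contra hne
    have hc0 := H.pure (r := r) (o := 0) (by omega) (by omega) (by omega)
    rw [add_zero] at hc0
    obtain ⟨hm, hjo⟩ := lemMark h1 hF (by rw [hc0]; omega)
    have hst : ∀ o, o ≤ C + 1 → f (r * r + o) = j * j + j := by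
      intro o
      induction o with
      | zero => intro _; simpa using hm
      | succ o ih =>
        intro ho
        have e := ih (by omega)
        have a1 := H.up (r * r + o) (by omega)
        have a2 := H.dn (r * r + o) (by omega)
        rw [add_assoc] at a1 a2
        have hc := H.pure (r := r) (o := o + 1) (by omega) (by omega) (by omega)
        have hsq : Nat.sqrt (f (r * r + (o + 1))) = j := by
          have : f (r * r + (o + 1)) = j * j + (f (r * r + (o + 1)) - j * j) := by omega
          rw [this]
          exact sqrt_cell (by omega)
        exact (lemMark h1 hsq (by rw [hc]; omega)).1
    have := H.ord (r * r) (r * r + (C + 1)) hrr (by omega)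
    rw [hst (C + 1) le_rfl, hm] at this
    omega
  refine ⟨hpar, ?_⟩
  intro o
  induction o using Nat.strong_induction_on with
  | _ o ih =>
    intro ho hor
    have hc := H.pure (r := r) (by omega) ho hor
    rw [hpar] at hc
    rcases Nat.eq_zero_or_pos o with h | h
    · subst h; simpa using hF
    · obtain ⟨o1, rfl⟩ : ∃ o1, o = o1 + 1 := ⟨o - 1, by omega⟩
      have a1 := H.up (r * r + o1) (by omega)
      have a2 := H.dn (r * r + o1) (by omega)
      rw [add_assoc] at a1 a2
      by_cases h3 : o1 = r
      · obtain ⟨o2, rfl⟩ : ∃ o2, o1 = o2 + 1 := ⟨o1 - 1, by omega⟩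
        have b1 := H.up (r * r + o2) (by omega)
        have b2 := H.dn (r * r + o2) (by omega)
        rw [add_assoc] at b1 b2
        exact lemZ hj h0 h2 (ih o2 (by omega) (by omega) (by omega)) (by omega) (by omega) hc
      · exact lemZ hj h0 h2 (ih o1 (by omega) (by omega) h3) (by omega) (by omega) hc

lemma Adv.step (H : Adv C f) {r j : ℕ} (hr : 4 * C + 4 ≤ r) (hj : 4 * C + 4 ≤ j)
    (h0 : ¬ VC (j - 1)) (h1 : ¬ VC j) (h2 : ¬ VC (j + 1)) (h3 : ¬ VC (j + 2))
    (hF : Nat.sqrt (f (r * r)) = j) : Nat.sqrt (f ((r + 1) * (r + 1))) = j + 1 := by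
  obtain ⟨hp, hs⟩ := H.start hr hj h0 h1 h2 hF
  have hrr : 1 ≤ r * r := by nlinarith
  have e1 : (r + 1) * (r + 1) = r * r + 2 * r + 1 := by ring
  have hl := hs (2 * r) le_rfl (by omega)
  have a1 := H.up (r * r + 2 * r) (by omega)
  have a2 := H.ord (r * r) ((r + 1) * (r + 1)) hrr (by omega)
  rw [← e1] at a1
  obtain ⟨o, ho, hpo⟩ := cell_sqrt (f (r * r))
  rw [hF] at ho hpo
  obtain ⟨o', ho', hpo'⟩ := cell_sqrt (f (r * r + 2 * r))
  rw [hl] at ho' hpo'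
  obtain ⟨o2, ho2, hpo2⟩ := cell_sqrt (f ((r + 1) * (r + 1)))
  have hne : Nat.sqrt (f ((r + 1) * (r + 1))) ≠ j := by
    intro h
    have := (H.start (r := r + 1) (by omega) hj h0 h1 h2 h).1
    omega
  generalize Nat.sqrt (f ((r + 1) * (r + 1))) = j' at *
  have hA : j' < j + 2 := by
    by_contra hne
    have : j + 2 ≤ j' := by omega
    nlinarith
  have hB : j < j' + 1 := by
    by_contra hne
    have : j' + 1 ≤ j := by omega
    nlinarith
  omega

lemma Adv.iter (H : Adv C f) {r j : ℕ} (n : ℕ) (hr : 4 * C + 4 ≤ r) (hj : 4 * C + 4 ≤ j)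
    (hV : ∀ i, j ≤ i + 1 → i ≤ j + n + 1 → ¬ VC i)
    (hF : Nat.sqrt (f (r * r)) = j) : Nat.sqrt (f ((r + n) * (r + n))) = j + n := by
  induction n with
  | zero => simpa using hF
  | succ n ih =>
    have h := ih (fun i hi hi' => hV i hi (by omega))
    exact H.step (r := r + n) (j := j + n) (by omega) (by omega) (hV _ (by omega) (by omega))
      (hV _ (by omega) (by omega)) (hV _ (by omega) (by omega)) (hV _ (by omega) (by omega)) h

lemma Adv.test (H : Adv C f) {r j : ℕ} (hr : 4 * C + 4 ≤ r) (hj : 4 * C + 4 ≤ j)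
    (h0 : ¬ VC (j - 1)) (h1 : ¬ VC j) (h2 : ¬ VC (j + 1)) (hF : Nat.sqrt (f (r * r)) = j)
    (hM : MA r) : MB j := by
  obtain ⟨hp, hs⟩ := H.start hr hj h0 h1 h2 hF
  have hrr : 1 ≤ r * r := by nlinarith
  have hro : r % 2 = 1 := by
    obtain ⟨T, _, hT⟩ := hM
    have := qs_even T
    omega
  have hl := hs (2 * r) le_rfl (by omega)
  have a1 := H.ord (r * r) (r * r + r) hrr (by omega)
  have a2 := H.ord (r * r + r) (r * r + 2 * r) (by omega) (by omega)
  obtain ⟨o, ho, hpo⟩ := cell_sqrt (f (r * r))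
  rw [hF] at ho hpo
  obtain ⟨o', ho', hpo'⟩ := cell_sqrt (f (r * r + 2 * r))
  rw [hl] at ho' hpo'
  have hc := H.col (r * r + r) (by omega)
  have hA : strA (r * r + r) = 1 := by
    rw [strA_cell (by omega)]; exact Or.inr ⟨rfl, hM⟩
  rw [hA, show f (r * r + r) = j * j + (f (r * r + r) - j * j) by omega,
    strB_cell (by omega) h1] at hc
  rcases hc with hc | hc
  · omega
  · exact hc.2

lemma nonV {T j : ℕ} (h1 : qs T * qs T + 3 ≤ j) (h2 : j < qs (T + 1) * qs (T + 1)) : ¬ VC j := by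
  rintro ⟨T', _, h⟩
  rcases Nat.lt_or_ge T T' with h3 | h3
  · have := v_mono (show T + 1 ≤ T' by omega); omega
  · have := v_mono h3; omega

end adversary

lemma adv_of_qi {C : ℕ} {f : ℕ → ℕ} (h : IsQI C strA strB f) : Adv C f := by
  obtain ⟨h1, h2, h3, h4, h5, h6⟩ := h
  refine ⟨h3, h4, h2 1 le_rfl, ?_, ?_, h6⟩
  · intro x hx
    have := abs_le.1 (h5 x hx)
    omega
  · intro x hx
    have := abs_le.1 (h5 x hx)
    omega

def FF (f : ℕ → ℕ) (r : ℕ) : ℕ := Nat.sqrt (f (r * r))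

lemma Adv.epoch {C : ℕ} {f : ℕ → ℕ} (H : Adv C f) {T : ℕ} (hw : 100 * (C + 1) ≤ qs T) :
    ∃ k ≤ T + 1, FF f (qs (T + 1) + 1) = qs (T + 1) + 1 + 2 * k ∧ GG (T + 1) k := by
  have hwv := qs_le_v T
  have hT := qs_ge T
  obtain ⟨v, hv⟩ : ∃ v, v = qs T * qs T := ⟨_, rfl⟩
  obtain ⟨u, hu⟩ : ∃ u, u = qs (T + 1) := ⟨_, rfl⟩
  obtain ⟨s, hs⟩ : ∃ s, s = u * u := ⟨_, rfl⟩
  have huv : u = v * v := by rw [hu, hv, qs]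
  rw [← hv] at hwv
  have hv1 : 100 * (C + 1) ≤ v := by omega
  have hvu : 100 * (C + 1) * v ≤ u := by rw [huv]; exact Nat.mul_le_mul_right v hv1
  have hvu' : v ≤ u := by nlinarith
  have hu1 : 100 * (C + 1) ≤ u := by omega
  have hus : 100 * (C + 1) * u ≤ s := by rw [hs]; exact Nat.mul_le_mul_right u hu1
  have hus' : u ≤ s := by nlinarith
  have hs1 : 100 * (C + 1) ≤ s := by omega
  rw [← hu]
  have hlow : v + 4 ≤ FF f (u + 1) := by
    unfold FF
    rw [Nat.le_sqrt]
    have e : (u + 1) * (u + 1) = 1 + (s + 2 * u) := by rw [hs]; ring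
    rw [e]
    have h4 : (v + 4) * (v + 4) ≤ 4 * u := by rw [huv]; nlinarith
    have := H.low 1 (s + 2 * u) ((v + 4) * (v + 4)) le_rfl (by nlinarith) (by
      calc (C + 1) * ((v + 4) * (v + 4)) ≤ (C + 1) * (4 * u) := Nat.mul_le_mul_left _ h4
        _ ≤ 100 * (C + 1) * u := by nlinarith
        _ ≤ s + 2 * u := by omega)
    omega
  have hup : FF f (u + 1) < s - 2 := by
    unfold FF
    rw [Nat.sqrt_lt]
    have e : (u + 1) * (u + 1) = 1 + (s + 2 * u) := by rw [hs]; ring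
    rw [e]
    have h1 := H.upd 1 (s + 2 * u) le_rfl
    have h2 := H.one
    obtain ⟨z, hz⟩ : ∃ z, s = z + 2 := ⟨s - 2, by omega⟩
    have e2 : s - 2 = z := by omega
    rw [e2]
    have h3 : C * (s + 2 * u) ≤ C * (3 * s) := Nat.mul_le_mul_left _ (by omega)
    have h4 : C * (3 * s) ≤ C * (4 * z) := Nat.mul_le_mul_left _ (by omega)
    have h5 : (5 * (C + 1)) * z ≤ z * z := Nat.mul_le_mul_right _ (by omega)
    nlinarith
  obtain ⟨j, hj⟩ : ∃ j, j = FF f (u + 1) := ⟨_, rfl⟩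
  rw [← hj] at hlow hup ⊢
  have hsq : s = qs (T + 1) * qs (T + 1) := by rw [hs, hu]
  have hMB : MB j := by
    refine H.test (r := u + 1) (by omega) (by omega) (nonV (T := T) ?_ ?_) (nonV (T := T) ?_ ?_)
      (nonV (T := T) ?_ ?_) hj.symm ⟨T + 1, ?_, by rw [hu]⟩
    all_goals first | (rw [← hv]; omega) | (rw [← hsq]; omega) | skip
    have := qs_ge (T + 1)
    omega
  obtain ⟨T', hT', k, hk, hjk, hG⟩ := hMB
  have : T' = T + 1 := by
    rcases lt_trichotomy T' (T + 1) with h | h | h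
    · exfalso
      have h1 := v_mono (show T' ≤ T by omega)
      have h2 := qs_le_v T'
      have h3 := qs_ge T'
      omega
    · exact h
    · exfalso
      have h1 := qs_lt h
      omega
  subst this
  exact ⟨k, by omega, by omega, hG⟩

set_option maxHeartbeats 1000000 in
lemma Adv.lag {C : ℕ} {f : ℕ → ℕ} (H : Adv C f) (hC : 1 ≤ C) {T k k' : ℕ}
    (hw : 100 * (C + 1) ≤ qs T)
    (hk : k ≤ T + 1) (h1 : FF f (qs (T + 1) + 1) = qs (T + 1) + 1 + 2 * k)
    (h2 : FF f (qs (T + 2) + 1) = qs (T + 2) + 1 + 2 * k') :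
    k' ≤ k + (C + 1) * (24 * (C + 1)) ∧ k ≤ k' + (C + 1) * (24 * (C + 1)) := by
  have hwv := qs_le_v T
  have hT := qs_ge (T + 1)
  obtain ⟨v, hv⟩ : ∃ v, v = qs T * qs T := ⟨_, rfl⟩
  obtain ⟨u, hu⟩ : ∃ u, u = qs (T + 1) := ⟨_, rfl⟩
  obtain ⟨s, hs⟩ : ∃ s, s = u * u := ⟨_, rfl⟩
  obtain ⟨U, hU⟩ : ∃ U, U = qs (T + 2) := ⟨_, rfl⟩
  have huv : u = v * v := by rw [hu, hv, qs]
  have hUs : U = s * s := by rw [hU, hs, hu, qs]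
  rw [← hv] at hwv
  rw [← hu] at h1 hT
  rw [← hU] at h2
  have hv1 : 100 * (C + 1) ≤ v := by omega
  have hvu : 100 * (C + 1) * v ≤ u := by rw [huv]; exact Nat.mul_le_mul_right v hv1
  have hvu' : 100 * v ≤ u := by nlinarith
  have hu1 : 100 * (C + 1) ≤ u := by omega
  have hus : 100 * (C + 1) * u ≤ s := by rw [hs]; exact Nat.mul_le_mul_right u hu1
  have hus' : 100 * u ≤ s := by nlinarith
  have hs1 : 100 * (C + 1) ≤ s := by omega
  have hsU : 100 * (C + 1) * s ≤ U := by rw [hUs]; exact Nat.mul_le_mul_right s hs1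
  have hsU' : 100 * s ≤ U := by nlinarith
  have hUU : U * 100 ≤ U * U := Nat.mul_le_mul_left _ (by omega)
  have hsq : s = qs (T + 1) * qs (T + 1) := by rw [hs, hu]
  have hUq : U * U = qs (T + 2) * qs (T + 2) := by rw [hU]
  obtain ⟨n, hn⟩ : ∃ n, n + (u + 1 + 2 * k) + 2 = s := ⟨s - 2 - (u + 1 + 2 * k), by omega⟩
  have h3 := H.iter (r := u + 1) (j := u + 1 + 2 * k) n (by omega) (by omega) (by
    intro i hi1 hi2
    refine nonV (T := T) ?_ ?_
    · rw [← hv]; omega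
    · rw [← hsq]; omega) h1
  obtain ⟨a, ha⟩ : ∃ a, a = u + 1 + n := ⟨_, rfl⟩
  rw [← ha] at h3
  obtain ⟨z, hz⟩ : ∃ z, s = z + 2 := ⟨s - 2, by omega⟩
  have e1 : u + 1 + 2 * k + n = z := by omega
  rw [e1] at h3
  have e2 : a + 2 * k = z := by omega
  obtain ⟨D, hD⟩ : ∃ D, D = 24 * (C + 1) := ⟨_, rfl⟩
  have hB : (C + 1) * (24 * (C + 1)) = C * D + D := by rw [hD]; ring
  rw [hB]
  have ha1 : s ≤ 2 * a - 1 := by omega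
  have haa : 1 ≤ a * a := Nat.mul_pos (by omega) (by omega)
  have g1 : z * z ≤ f (a * a) := by rw [← Nat.le_sqrt, h3]
  have g2 : f (a * a) < (z + 1) * (z + 1) := by rw [← Nat.sqrt_lt, h3]; omega
  have e3 : (a + D) * (a + D) = a * a + (2 * a * D + D * D) := by ring
  have hlow : s + 4 ≤ Nat.sqrt (f ((a + D) * (a + D))) := by
    rw [Nat.le_sqrt, e3]
    have := H.low (a * a) (2 * a * D + D * D) (12 * s + 12) haa (by omega) (by
      have h5 : s + 1 ≤ 2 * a := by omega
      calc (C + 1) * (12 * s + 12) = 12 * (C + 1) * (s + 1) := by ring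
        _ ≤ 12 * (C + 1) * (2 * a) := Nat.mul_le_mul_left _ h5
        _ ≤ 2 * a * D + D * D := by rw [hD]; calc
            12 * (C + 1) * (2 * a) ≤ 12 * (C + 1) * (2 * a) + 12 * (C + 1) * (2 * a) := Nat.le_add_right _ _
            _ = 2 * a * (24 * (C + 1)) := by ring
            _ ≤ _ := Nat.le_add_right _ _)
    have e4 : (s + 4) * (s + 4) = z * z + (12 * s + 12) := by rw [hz]; ring
    omega
  have hup : Nat.sqrt (f ((a + D) * (a + D))) < s + C * D + 1 := by
    rw [Nat.sqrt_lt, e3]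
    have h4 := H.upd (a * a) (2 * a * D + D * D) haa
    have h5 : C * (2 * a * D) ≤ C * (2 * s * D) := by gcongr; omega
    have h6 : 1 * (C * (D * D)) ≤ C * (C * (D * D)) := Nat.mul_le_mul_right _ hC
    have h7 : (z + 1) * (z + 1) ≤ s * s := Nat.mul_le_mul (by omega) (by omega)
    have h8 : C * (2 * a * D + D * D) = C * (2 * a * D) + C * (D * D) := by ring
    have h9 : (s + C * D + 1) * (s + C * D + 1) =
        s * s + C * (2 * s * D) + C * (C * (D * D)) + 2 * s + 2 * (C * D) + 1 := by ring
    omega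
  obtain ⟨j, hj⟩ : ∃ j, j = Nat.sqrt (f ((a + D) * (a + D))) := ⟨_, rfl⟩
  rw [← hj] at hlow hup
  have hCD : C * D ≤ U := by
    calc C * D ≤ (100 * (C + 1)) * s := Nat.mul_le_mul (by omega) (by omega)
      _ ≤ U := hsU
  obtain ⟨m, hm⟩ : ∃ m, a + D + m = U + 1 := ⟨U + 1 - (a + D), by omega⟩
  have h8 := H.iter (r := a + D) (j := j) m (by omega) (by omega) (by
    intro i hi1 hi2
    refine nonV (T := T + 1) ?_ ?_
    · rw [← hsq]; omega
    · show i < qs (T + 2) * qs (T + 2)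
      rw [← hUq]; omega) hj.symm
  rw [hm] at h8
  unfold FF at h2
  rw [h2] at h8
  omega

lemma digit_step {B e T k k' : ℕ} (hT : (B + 2) * 5 ^ (e + 2) ≤ T)
    (hk : k ≤ T) (hk' : k' ≤ T + 1) (h1 : k' ≤ k + B) (h2 : k ≤ k' + B)
    (hd : dig T k e = 1 ∨ dig T k e = 3) (hd' : dig (T + 1) k' e = 1 ∨ dig (T + 1) k' e = 3) :
    dig (T + 1) k' e = dig T k e := by
  unfold dig at *
  have hP : 0 < 5 ^ (e + 1) := by positivity
  have e5 : 5 ^ (e + 2) = 5 * 5 ^ (e + 1) := by ring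
  rw [e5] at hT
  generalize 5 ^ (e + 1) = P at *
  have hTB : (B + 1) * P + 1 ≤ T := by nlinarith
  have hT0 : 0 < T := by omega
  have k1 : k' * P / (T + 1) ≤ k * P / T + 1 := by
    have q1 := Nat.div_mul_le_self (k' * P) (T + 1)
    have q2 : k * P < (k * P / T + 1) * T := by
      rw [mul_comm (_ + 1)]; exact Nat.lt_mul_div_succ _ hT0
    by_contra hc
    push Not at hc
    have q3 : (k * P / T + 2) * (T + 1) ≤ k' * P / (T + 1) * (T + 1) := Nat.mul_le_mul_right _ hc
    have q4 : k' * P ≤ (k + B) * P := Nat.mul_le_mul_right _ h1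
    nlinarith
  have k2 : k * P / T ≤ k' * P / (T + 1) + 1 := by
    have q1 := Nat.div_mul_le_self (k * P) T
    have q2 : k' * P < (k' * P / (T + 1) + 1) * (T + 1) := by
      rw [mul_comm (_ / _ + 1)]; exact Nat.lt_mul_div_succ _ (by omega)
    have q5 : k' * P / (T + 1) ≤ P := by
      apply Nat.div_le_of_le_mul
      exact Nat.mul_le_mul_right _ hk'
    by_contra hc
    push Not at hc
    have q3 : (k' * P / (T + 1) + 2) * T ≤ k * P / T * T := Nat.mul_le_mul_right _ hc
    have q4 : k * P ≤ (k' + B) * P := Nat.mul_le_mul_right _ h2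
    nlinarith
  omega

lemma no_mqi : ¬ MQIred strA strB := by
  rintro ⟨C, f, hq, hf⟩
  have hC := hq.1
  have H := adv_of_qi hq
  obtain ⟨B, hB⟩ : ∃ B, B = (C + 1) * (24 * (C + 1)) := ⟨_, rfl⟩
  obtain ⟨N, hN⟩ : ∃ N, N = 100 * (C + 1) := ⟨_, rfl⟩
  have hNq : ∀ T, N ≤ T → 100 * (C + 1) ≤ qs T := by
    intro T hT
    have := qs_ge T
    omega
  let kk : ℕ → ℕ := fun T => (FF f (qs T + 1) - (qs T + 1)) / 2
  have hkk : ∀ T, N + 1 ≤ T → kk T ≤ T ∧ FF f (qs T + 1) = qs T + 1 + 2 * kk T ∧ GG T (kk T) := by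
    intro T hT
    obtain ⟨T, rfl⟩ : ∃ T', T = T' + 1 := ⟨T - 1, by omega⟩
    obtain ⟨k, h1, h2, h3⟩ := H.epoch (hNq T (by omega))
    have : kk (T + 1) = k := by
      show (FF f (qs (T + 1) + 1) - (qs (T + 1) + 1)) / 2 = k
      omega
    rw [this]
    exact ⟨h1, h2, h3⟩
  have hlag : ∀ T, N + 1 ≤ T → kk (T + 1) ≤ kk T + B ∧ kk T ≤ kk (T + 1) + B := by
    intro T hT
    obtain ⟨T, rfl⟩ : ∃ T', T = T' + 1 := ⟨T - 1, by omega⟩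
    rw [hB]
    have a1 := hkk (T + 1) hT
    have a2 := hkk (T + 2) (by omega)
    exact H.lag hC (hNq T (by omega)) a1.1 a1.2.1 a2.2.1
  let T1 : ℕ → ℕ := fun e => (B + 2) * 5 ^ (e + 2) + N + 1
  have hT1 : ∀ e T, T1 e ≤ T → N + 1 ≤ T ∧ (B + 2) * 5 ^ (e + 2) ≤ T ∧ e < T ∧ 5 ^ (e + 2) ≤ T := by
    intro e T hT
    have hT' : (B + 2) * 5 ^ (e + 2) + N + 1 ≤ T := hT
    have h5 : e + 2 < 5 ^ (e + 2) := Nat.lt_pow_self (by norm_num)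
    have h6 : 1 * 5 ^ (e + 2) ≤ (B + 2) * 5 ^ (e + 2) := Nat.mul_le_mul_right _ (by omega)
    omega
  have stab : ∀ e n, dig (T1 e + n) (kk (T1 e + n)) e = dig (T1 e) (kk (T1 e)) e := by
    intro e n
    induction n with
    | zero => rfl
    | succ n ih =>
      rw [← ih]
      obtain ⟨t1, t2, t3, t4⟩ := hT1 e (T1 e + n) (by omega)
      have a1 := hkk (T1 e + n) t1
      have a2 := hkk (T1 e + n + 1) (by omega)
      have a3 := hlag (T1 e + n) t1
      exact digit_step t2 a1.1 a2.1 a3.1 a3.2 (a1.2.2 e t3 t4).1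
        (a2.2.2 e (by omega) (by omega)).1
  let g : ℕ → ℕ := fun e => dig (T1 e) (kk (T1 e)) e / 2
  have hT1c : Computable T1 := by
    have h1 : Primrec (fun e : ℕ => 5 ^ (e + 2)) :=
      pow5_prim.comp (Primrec.nat_add.comp Primrec.id (Primrec.const 2))
    exact (Primrec.succ.comp (Primrec.nat_add.comp
      (Primrec.nat_mul.comp (Primrec.const (B + 2)) h1) (Primrec.const N))).to_comp
  have hkc : Computable kk := by
    have h1 : Computable (fun T => qs T + 1) := (Primrec.succ.comp qs_prim).to_comp
    have h2 : Computable (fun T => (qs T + 1) * (qs T + 1)) :=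
      (Primrec.nat_mul.comp (Primrec.succ.comp qs_prim) (Primrec.succ.comp qs_prim)).to_comp
    have h3 : Computable (fun T => Nat.sqrt (f ((qs T + 1) * (qs T + 1)))) :=
      Primrec.nat_sqrt.to_comp.comp (hf.comp h2)
    have h4 := Primrec.nat_sub.to_comp.comp h3 h1
    exact (Primrec.nat_div.comp Primrec.id (Primrec.const 2)).to_comp.comp h4
  have hgc : Computable g := by
    have h1 : Computable (fun e => dig (T1 e) (kk (T1 e)) e) :=
      dig_prim.to_comp.comp (Computable.id.pair (hT1c.pair (hkc.comp hT1c)))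
    exact (Primrec.nat_div.comp Primrec.id (Primrec.const 2)).to_comp.comp h1
  obtain ⟨c, hc⟩ := Code.exists_code.1 (Partrec.nat_iff.1 hgc.partrec)
  obtain ⟨e, he⟩ : ∃ e, e = Encodable.encode c := ⟨_, rfl⟩
  have hce : Denumerable.ofNat Code e = c := by rw [he]; exact Denumerable.ofNat_encode c
  have hm : g e ∈ Code.eval c e := by rw [hc]; simp
  obtain ⟨n, hn⟩ := Code.evaln_complete.1 hm
  have hn' := Code.evaln_mono (show n ≤ T1 e + n by omega) hn
  obtain ⟨t1, t2, t3, t4⟩ := hT1 e (T1 e + n) (by omega)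
  have := ((hkk (T1 e + n) t1).2.2 e t3 t4).2
  apply this
  rw [stab e n, hce]
  exact hn'

end QM

/-- There exist two computable strings `α` and `β` over `{0,1}`
such that `α ≤_qi β` (a quasi-isometric reduction exists) but `α` is not
mqi-reducible to `β` (no computable quasi-isometric reduction exists). -/
theorem qi_not_implies_mqi :
    ∃ α β : ℕ → Fin 2, Computable α ∧ Computable β ∧ QIred α β ∧ ¬ MQIred α β := by
  exact ⟨QM.strA, QM.strB, QM.strA_comp, QM.strB_comp, QM.true_red, QM.no_mqi⟩
end
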